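/- There exists a constant K > 0 such that Δd ≤ K/d in the sense of distributions on ℍ: for every nonnegative smooth compactly supported function φ:ℝ³→ℝ, ∫_{ℝ³} d(x)·Δφ(x) dx ≤ K ∫_{ℝ³} φ(x)/d(x) dx. -/

import Mathlib

open MeasureTheory Real Filter

noncomputable section

/-- The underlying space of the Heisenberg group: `ℝ³`. -/
abbrev Heis : Type := ℝ × ℝ × ℝ

/-- The Heisenberg group multiplication. -/
def Hmul (x y : Heis) : Heis :=
  (x.1 + y.1, x.2.1 + y.2.1,
    x.2.2 + y.2.2 + (x.1 * y.2.1 - x.2.1 * y.1) / 2)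

/-- The identity element of the Heisenberg group. -/
def He : Heis := ((0 : ℝ), (0 : ℝ), (0 : ℝ))

/-- The left-invariant vector field `X₁ = ∂₁ - (x₂/2) ∂₃` acting on functions. -/
def X1 (f : Heis → ℝ) (x : Heis) : ℝ :=
  fderiv ℝ f x (1, 0, 0) - x.2.1 / 2 * fderiv ℝ f x (0, 0, 1)

/-- The left-invariant vector field `X₂ = ∂₂ + (x₁/2) ∂₃` acting on functions. -/
def X2 (f : Heis → ℝ) (x : Heis) : ℝ :=
  fderiv ℝ f x (0, 1, 0) + x.1 / 2 * fderiv ℝ f x (0, 0, 1)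

/-- The vector field `X₃ = ∂₃` acting on functions. -/
def X3 (f : Heis → ℝ) (x : Heis) : ℝ := fderiv ℝ f x (0, 0, 1)

/-- The length `|∇f|` of the sub-gradient `∇f = (X₁ f, X₂ f)`. -/
def gradLen (f : Heis → ℝ) (x : Heis) : ℝ :=
  Real.sqrt ((X1 f x) ^ 2 + (X2 f x) ^ 2)

/-- The sub-Laplacian `Δ = X₁² + X₂²`. -/
def subLap (f : Heis → ℝ) (x : Heis) : ℝ := X1 (X1 f) x + X2 (X2 f) x

/-- An admissible (horizontal Lipschitz) path from `x` to `y` in the Heisenberg group: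
`γ'(s) = a₁(s) X₁(γ(s)) + a₂(s) X₂(γ(s))` almost everywhere on `[0,1]`. -/
structure AdmissiblePath (x y : Heis) where
  γ : ℝ → Heis
  a1 : ℝ → ℝ
  a2 : ℝ → ℝ
  lipschitz : ∃ K : NNReal, LipschitzOnWith K γ (Set.Icc 0 1)
  meas1 : Measurable a1
  meas2 : Measurable a2
  start : γ 0 = x
  endpoint : γ 1 = y
  admissible : ∀ᵐ s ∂(volume.restrict (Set.Icc (0:ℝ) 1)),
    HasDerivAt γ (a1 s • (((1 : ℝ), (0 : ℝ), -(γ s).2.1 / 2) : Heis)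
      + a2 s • (((0 : ℝ), (1 : ℝ), (γ s).1 / 2) : Heis)) s

/-- The length of an admissible path. -/
def pathLength {x y : Heis} (p : AdmissiblePath x y) : ℝ :=
  ∫ s in Set.Icc (0:ℝ) 1, Real.sqrt (p.a1 s ^ 2 + p.a2 s ^ 2)

/-- The Carnot–Carathéodory distance on the Heisenberg group. -/
def ccDist (x y : Heis) : ℝ :=
  sInf {l : ℝ | ∃ p : AdmissiblePath x y, l = pathLength p}

/-- The Carnot–Carathéodory distance to the identity `e`. -/
def ccNorm (x : Heis) : ℝ := ccDist x He

/-- The dilations `δ_λ(x) = (λx₁, λx₂, λ²x₃)`. -/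
def dil (lam : ℝ) (x : Heis) : Heis := (lam * x.1, lam * x.2.1, lam ^ 2 * x.2.2)

end

/-!
An admissible curve from `x` to `e` is a plane curve `P` ending at `0` whose swept area is the
vertical coordinate of `x`. Suppose its length `L` is close to `d(x)`. Then `P` spreads out: its
variance with respect to arclength is at least a multiple of `L²`, since otherwise `P` would stay in
a disc of radius much smaller than `L`, and a much shorter curve would reach `e`. To move the
starting point by `w`, translate `P` by an amount decreasing linearly in arclength, and correct
the area by deforming `P` in a direction `v` of large variance, at a rate given by the deviation of
the `v`-width from its mean; the variance bounds the size of this correction. The length of the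
deformed curve is an explicit upper barrier for `d` near `x`, so that the second differences of `d`
along horizontal lines are `O(|w|² / d(x))`. As right translations preserve Lebesgue measure, these
second differences can be moved onto the test function, and dividing by the square of the step and
letting it tend to `0` gives the bound in the sense of distributions.
-/

/-- Lebesgue measure on the parameter interval `[0, 1]` of the curves. -/
noncomputable abbrev unitVolume : Measure ℝ := volume.restrict (Set.Icc 0 1)

theorem ae_unitVolume_mem_Ioo : ∀ᵐ s ∂unitVolume, s ∈ Set.Ioo (0 : ℝ) 1 := by
  rw [unitVolume, ← restrict_Ioo_eq_restrict_Icc]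
  exact ae_restrict_mem measurableSet_Ioo

theorem ae_unitVolume_mem_Icc : ∀ᵐ s ∂unitVolume, s ∈ Set.Icc (0 : ℝ) 1 :=
  ae_restrict_mem measurableSet_Icc

section Primitives

variable {E G H : Type*} [NormedAddCommGroup E] [NormedSpace ℝ E] [NormedAddCommGroup G]
  [NormedSpace ℝ G] [NormedAddCommGroup H] [NormedSpace ℝ H] {F f : ℝ → E} {U u : ℝ → G}

theorem memLp_top_bilin {α : Type*} [MeasurableSpace α] {μ : Measure α}
    {f : α → E} {g : α → G} (B : E →L[ℝ] G →L[ℝ] H) (hf : MemLp f ⊤ μ) (hg : MemLp g ⊤ μ) :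
    MemLp (fun s => B (f s) (g s)) ⊤ μ :=
  hf.of_bilin (fun x y => B x y) ‖B‖₊ hg
    (B.aestronglyMeasurable_comp₂ hf.aestronglyMeasurable hg.aestronglyMeasurable)
    (Eventually.of_forall fun s => B.le_opNorm₂ (f s) (g s))

/-- `F` is Lipschitz on `[0, 1]` with derivative `f` almost everywhere there, that is, `F` is an
indefinite integral of the essentially bounded function `f`. -/
structure IsLipschitzPrimitive (F f : ℝ → E) : Prop where
  lipschitzOnWith : ∃ K, LipschitzOnWith K F (Set.Icc 0 1)
  ae_hasDerivAt : ∀ᵐ s ∂unitVolume, HasDerivAt F (f s) s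

namespace IsLipschitzPrimitive

theorem const (c : E) : IsLipschitzPrimitive (fun _ => c) (fun _ => 0) :=
  ⟨⟨0, (LipschitzWith.const c).lipschitzOnWith⟩, Eventually.of_forall fun s => hasDerivAt_const s c⟩

theorem of_hasDerivAt (h : ∀ s, HasDerivAt F (f s) s) (hf : Continuous f) :
    IsLipschitzPrimitive F f := by
  refine ⟨?_, Eventually.of_forall h⟩
  obtain ⟨C, hC⟩ := isCompact_Icc.exists_bound_of_continuousOn hf.continuousOn
  refine ⟨C.toNNReal, Convex.lipschitzOnWith_of_nnnorm_hasDerivWithin_le (convex_Icc 0 1)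
    (fun s _ => (h s).hasDerivWithinAt) fun s hs => ?_⟩
  exact NNReal.le_toNNReal_of_coe_le (hC s hs)

theorem continuousOn (hF : IsLipschitzPrimitive F f) : ContinuousOn F (Set.Icc 0 1) :=
  hF.lipschitzOnWith.choose_spec.continuousOn

theorem memLp_top (hF : IsLipschitzPrimitive F f) : MemLp F ⊤ unitVolume := by
  obtain ⟨C, hC⟩ := isCompact_Icc.exists_bound_of_continuousOn hF.continuousOn
  refine memLp_top_of_bound
    (hF.continuousOn.aestronglyMeasurable_of_isCompact isCompact_Icc measurableSet_Icc) C ?_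
  filter_upwards [ae_unitVolume_mem_Icc] with s hs using hC s hs

theorem memLp_top_deriv [CompleteSpace E] (hF : IsLipschitzPrimitive F f) :
    MemLp f ⊤ unitVolume := by
  obtain ⟨K, hK⟩ := hF.lipschitzOnWith
  refine memLp_top_of_bound ((stronglyMeasurable_deriv F).aestronglyMeasurable.congr ?_) K ?_
  · filter_upwards [hF.ae_hasDerivAt] with s hs using hs.deriv
  · filter_upwards [hF.ae_hasDerivAt, ae_unitVolume_mem_Ioo] with s hs hmem
    exact hs.le_of_lipschitzOn (Icc_mem_nhds hmem.1 hmem.2) hK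

theorem add {g G : ℝ → E} (hF : IsLipschitzPrimitive F f) (hG : IsLipschitzPrimitive G g) :
    IsLipschitzPrimitive (fun s => F s + G s) (fun s => f s + g s) := by
  obtain ⟨K, hK⟩ := hF.lipschitzOnWith
  obtain ⟨M, hM⟩ := hG.lipschitzOnWith
  refine ⟨⟨K + M, hK.add hM⟩, ?_⟩
  filter_upwards [hF.ae_hasDerivAt, hG.ae_hasDerivAt] with s h₁ h₂ using h₁.add h₂

theorem sub_const (hF : IsLipschitzPrimitive F f) (c : E) :
    IsLipschitzPrimitive (fun s => F s - c) f := by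
  simpa only [sub_eq_add_neg, add_zero] using hF.add (const (-c))

theorem clm (L : E →L[ℝ] G) (hF : IsLipschitzPrimitive F f) :
    IsLipschitzPrimitive (fun s => L (F s)) (fun s => L (f s)) := by
  obtain ⟨K, hK⟩ := hF.lipschitzOnWith
  refine ⟨⟨_, L.lipschitz.comp_lipschitzOnWith hK⟩, ?_⟩
  filter_upwards [hF.ae_hasDerivAt] with s hs using L.hasFDerivAt.comp_hasDerivAt s hs

theorem prodMk (hF : IsLipschitzPrimitive F f) (hU : IsLipschitzPrimitive U u) :
    IsLipschitzPrimitive (fun s => (F s, U s)) (fun s => (f s, u s)) := by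
  obtain ⟨K, hK⟩ := hF.lipschitzOnWith
  obtain ⟨M, hM⟩ := hU.lipschitzOnWith
  refine ⟨⟨max K M, hK.prodMk hM⟩, ?_⟩
  filter_upwards [hF.ae_hasDerivAt, hU.ae_hasDerivAt] with s h₁ h₂ using h₁.prodMk h₂

theorem bilin (B : E →L[ℝ] G →L[ℝ] H) (hF : IsLipschitzPrimitive F f)
    (hU : IsLipschitzPrimitive U u) :
    IsLipschitzPrimitive (fun s => B (F s) (U s)) (fun s => B (F s) (u s) + B (f s) (U s)) := by
  refine ⟨?_, ?_⟩
  · obtain ⟨K, hK⟩ := hF.lipschitzOnWith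
    obtain ⟨M, hM⟩ := hU.lipschitzOnWith
    obtain ⟨C, hC⟩ := isCompact_Icc.exists_bound_of_continuousOn hF.continuousOn
    obtain ⟨D, hD⟩ := isCompact_Icc.exists_bound_of_continuousOn hU.continuousOn
    refine ⟨(‖B‖ * (C * M + K * D)).toNNReal, LipschitzOnWith.of_dist_le_mul fun s hs t ht => ?_⟩
    have hC₀ : 0 ≤ C := (norm_nonneg _).trans (hC s hs)
    calc dist (B (F s) (U s)) (B (F t) (U t))
        = ‖B (F s) (U s - U t) + B (F s - F t) (U t)‖ := by
          rw [dist_eq_norm]; congr 1; simp only [map_sub, sub_apply]; abel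
      _ ≤ ‖B‖ * ‖F s‖ * ‖U s - U t‖ + ‖B‖ * ‖F s - F t‖ * ‖U t‖ :=
          (norm_add_le _ _).trans (add_le_add (B.le_opNorm₂ _ _) (B.le_opNorm₂ _ _))
      _ ≤ ‖B‖ * C * (M * dist s t) + ‖B‖ * (K * dist s t) * D := by
          gcongr
          · exact hC s hs
          · exact dist_eq_norm (U s) (U t) ▸ hM.dist_le_mul s hs t ht
          · exact dist_eq_norm (F s) (F t) ▸ hK.dist_le_mul s hs t ht
          · exact hD t ht
      _ = ‖B‖ * (C * M + K * D) * dist s t := by ring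
      _ ≤ (‖B‖ * (C * M + K * D)).toNNReal * dist s t := by gcongr; exact Real.le_coe_toNNReal _
  · filter_upwards [hF.ae_hasDerivAt, hU.ae_hasDerivAt] with s h₁ h₂
    exact B.hasDerivAt_of_bilinear (fun _ => h₁) (fun _ => h₂)

theorem of_memLp [CompleteSpace E] (hf : MemLp f ⊤ unitVolume) :
    IsLipschitzPrimitive (fun s => ∫ t in (0 : ℝ)..s, f t) f := by
  have hint : IntervalIntegrable f volume 0 1 := by
    rw [intervalIntegrable_iff_integrableOn_Icc_of_le zero_le_one]
    exact hf.integrable le_top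
  have hint' {s : ℝ} (hs : s ∈ Set.Icc (0 : ℝ) 1) : IntervalIntegrable f volume 0 s :=
    hint.mono_set <| by
      rw [Set.uIcc_of_le zero_le_one]
      exact Set.ordConnected_Icc.uIcc_subset (by simp) hs
  refine ⟨⟨(eLpNormEssSup f unitVolume).toNNReal, LipschitzOnWith.of_dist_le_mul ?_⟩, ?_⟩
  · intro s hs t ht
    rw [dist_eq_norm, intervalIntegral.integral_interval_sub_left (hint' hs) (hint' ht),
      Real.dist_eq]
    refine intervalIntegral.norm_integral_le_of_norm_le_const_ae ?_
    filter_upwards [(ae_restrict_iff' measurableSet_Icc).1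
      (ae_le_eLpNormEssSup (f := f) (μ := unitVolume))] with r hr hmem
    have hfin : eLpNormEssSup f unitVolume ≠ ⊤ := by simpa using hf.eLpNorm_ne_top
    exact ENNReal.toNNReal_mono hfin
      (hr (Set.ordConnected_Icc.uIcc_subset ht hs (Set.uIoc_subset_uIcc hmem)))
  · rw [ae_restrict_iff' measurableSet_Icc]
    filter_upwards [hint.ae_hasDerivAt_integral] with s hs hmem
    exact hs (Set.Icc_subset_uIcc hmem) 0 (by simp)

theorem intervalIntegral_eq_sub [CompleteSpace E] (hF : IsLipschitzPrimitive F f) {s t : ℝ}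
    (hs : s ∈ Set.Icc (0 : ℝ) 1) (ht : t ∈ Set.Icc (0 : ℝ) 1) : ∫ r in s..t, f r = F t - F s := by
  have hsub : Set.uIcc s t ⊆ Set.Icc 0 1 := Set.ordConnected_Icc.uIcc_subset hs ht
  have hint : IntervalIntegrable f volume s t := by
    rw [intervalIntegrable_iff]
    exact IntegrableOn.mono_set (hF.memLp_top_deriv.integrable le_top)
      (Set.uIoc_subset_uIcc.trans hsub)
  -- Testing against functionals reduces to the real-valued case.
  refine SeparatingDual.eq_iff_forall_dual_eq (R := ℝ).2 fun g => ?_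
  obtain ⟨K, hK⟩ := (hF.clm g).lipschitzOnWith
  rw [← g.intervalIntegral_comp_comm hint, map_sub,
    ← ((hK.mono hsub).absolutelyContinuousOnInterval).integral_deriv_eq_sub]
  refine intervalIntegral.integral_congr_ae ?_
  filter_upwards [(ae_restrict_iff' measurableSet_Icc).1 (hF.clm g).ae_hasDerivAt] with r hr hmem
  exact (hr (hsub (Set.uIoc_subset_uIcc hmem))).deriv.symm

theorem integral_eq_sub [CompleteSpace E] (hF : IsLipschitzPrimitive F f) :
    ∫ s, f s ∂unitVolume = F 1 - F 0 := by
  rw [← hF.intervalIntegral_eq_sub (by simp) (by simp), intervalIntegral.integral_of_le zero_le_one,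
    integral_Icc_eq_integral_Ioc]

theorem norm_sub_le [CompleteSpace E] (hF : IsLipschitzPrimitive F f) {m : ℝ → ℝ}
    (hm : MemLp m ⊤ unitVolume) (hfm : ∀ᵐ s ∂unitVolume, ‖f s‖ ≤ m s) {s t : ℝ}
    (hs : s ∈ Set.Icc (0 : ℝ) 1) (ht : t ∈ Set.Icc (0 : ℝ) 1) :
    ‖F t - F s‖ ≤ ∫ r, m r ∂unitVolume := by
  have hsub : Set.uIoc s t ⊆ Set.Icc 0 1 :=
    Set.uIoc_subset_uIcc.trans (Set.ordConnected_Icc.uIcc_subset hs ht)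
  rw [← hF.intervalIntegral_eq_sub hs ht]
  calc ‖∫ r in s..t, f r‖ ≤ ∫ r in Set.uIoc s t, ‖f r‖ :=
        intervalIntegral.norm_integral_le_integral_norm_uIoc
    _ ≤ ∫ r, ‖f r‖ ∂unitVolume :=
        setIntegral_mono_set (hF.memLp_top_deriv.integrable le_top).norm
          (Eventually.of_forall fun _ => norm_nonneg _) hsub.eventuallyLE
    _ ≤ ∫ r, m r ∂unitVolume :=
        integral_mono_ae (hF.memLp_top_deriv.integrable le_top).norm (hm.integrable le_top) hfm

end IsLipschitzPrimitive

end Primitives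

/-- The oriented area `z.re * w.im - z.im * w.re` of the parallelogram spanned by two plane
vectors, as a bilinear form; it is twice the symplectic term of the group law. -/
noncomputable def areaForm : ℂ →L[ℝ] ℂ →L[ℝ] ℝ :=
  ContinuousLinearMap.compL ℝ ℂ ℂ ℝ Complex.imCLM ∘L
    ContinuousLinearMap.mul ℝ ℂ ∘L (Complex.conjCLE : ℂ →L[ℝ] ℂ)

theorem areaForm_apply (z w : ℂ) : areaForm z w = z.re * w.im - z.im * w.re := by
  simp only [areaForm, ContinuousLinearMap.comp_apply, ContinuousLinearEquiv.coe_coe,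
    ContinuousAlgEquiv.coeCLE_apply, Complex.conjCAE_apply, ContinuousLinearMap.compL_apply,
    ContinuousLinearMap.mul_apply', Complex.imCLM_apply, Complex.mul_im, Complex.conj_re,
    Complex.conj_im]
  ring

theorem areaForm_swap (z w : ℂ) : areaForm z w = -areaForm w z := by
  simp only [areaForm_apply]; ring

theorem abs_areaForm_le (z w : ℂ) : |areaForm z w| ≤ ‖z‖ * ‖w‖ := by
  simpa [areaForm] using Complex.abs_im_le_norm (starRingEnd ℂ z * w)

/-- The point of the Heisenberg group with horizontal part `z` and vertical coordinate `t`. -/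
def heisPoint (z : ℂ) (t : ℝ) : Heis := (z.re, z.im, t)

/-- The horizontal part of a point of the Heisenberg group. -/
noncomputable def horizontalPart : Heis →L[ℝ] ℂ :=
  (Complex.equivRealProdCLM.symm : ℝ × ℝ →L[ℝ] ℂ) ∘L
    (ContinuousLinearMap.fst ℝ ℝ (ℝ × ℝ)).prod
      (ContinuousLinearMap.fst ℝ ℝ ℝ ∘L ContinuousLinearMap.snd ℝ ℝ (ℝ × ℝ))

theorem horizontalPart_apply (x : Heis) : horizontalPart x = ⟨x.1, x.2.1⟩ := rfl

theorem heisPoint_horizontalPart (x : Heis) : heisPoint (horizontalPart x) x.2.2 = x := rfl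

theorem neg_heisPoint (z : ℂ) (t : ℝ) : -heisPoint z t = heisPoint (-z) (-t) := rfl

theorem Hmul_heisPoint (z w : ℂ) (s t : ℝ) :
    Hmul (heisPoint z s) (heisPoint w t) = heisPoint (z + w) (s + t + areaForm z w / 2) := by
  simp [Hmul, heisPoint, areaForm_apply]

/-- `P` is a Lipschitz plane curve with velocity `a` that ends at the origin. The admissible paths
ending at the identity are exactly the lifts of such curves. -/
structure IsPlanarCurve (P a : ℝ → ℂ) : Prop extends IsLipschitzPrimitive P a where
  map_one : P 1 = 0

/-- The starting point of the horizontal lift, ending at the identity, of a plane curve `P` with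
velocity `a`; its height is the area enclosed between the curve and the origin. -/
noncomputable def liftStart (P a : ℝ → ℂ) : Heis :=
  heisPoint (P 0) (-((∫ s, areaForm (P s) (a s) ∂unitVolume) / 2))

theorem horizontalPart_liftStart (P a : ℝ → ℂ) : horizontalPart (liftStart P a) = P 0 := rfl

theorem pathLength_nonneg {x y : Heis} (p : AdmissiblePath x y) : 0 ≤ pathLength p :=
  integral_nonneg fun _ => Real.sqrt_nonneg _

theorem ccNorm_nonneg (x : Heis) : 0 ≤ ccNorm x :=
  Real.sInf_nonneg <| by rintro l ⟨p, rfl⟩; exact pathLength_nonneg p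

theorem ccNorm_le_pathLength {x : Heis} (p : AdmissiblePath x He) : ccNorm x ≤ pathLength p :=
  csInf_le ⟨0, by rintro l ⟨q, rfl⟩; exact pathLength_nonneg q⟩ ⟨p, rfl⟩

namespace IsPlanarCurve

variable {P a : ℝ → ℂ}

theorem memLp_top_areaForm (h : IsPlanarCurve P a) :
    MemLp (fun s => areaForm (P s) (a s)) ⊤ unitVolume :=
  memLp_top_bilin areaForm h.memLp_top h.memLp_top_deriv

theorem exists_pathLength_eq (h : IsPlanarCurve P a) :
    ∃ p : AdmissiblePath (liftStart P a) He, pathLength p = ∫ s, ‖a s‖ ∂unitVolume := by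
  set c := -((∫ s, areaForm (P s) (a s) ∂unitVolume) / 2) with hc
  have hV := (IsLipschitzPrimitive.const c).add
    (.of_memLp (h.memLp_top_areaForm.const_mul 2⁻¹))
  have hγ := (h.clm Complex.reCLM).prodMk ((h.clm Complex.imCLM).prodMk hV)
  have hVend : c + 2⁻¹ * ∫ s in (0 : ℝ)..1, areaForm (P s) (a s) = 0 := by
    have := hV.integral_eq_sub
    simp only [zero_add, integral_const_mul, intervalIntegral.integral_same] at this
    simp only [intervalIntegral.integral_const_mul] at this
    linarith
  refine ⟨⟨_, fun s => (deriv P s).re, fun s => (deriv P s).im, hγ.lipschitzOnWith,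
    Complex.measurable_re.comp (measurable_deriv P),
    Complex.measurable_im.comp (measurable_deriv P), ?_, ?_, ?_⟩, ?_⟩
  · simp [liftStart, heisPoint, hc]
  · simp [h.map_one, He, hVend]
  · filter_upwards [hγ.ae_hasDerivAt, h.ae_hasDerivAt] with s hs hP
    refine hs.congr_deriv ?_
    simp only [hP.deriv, Complex.reCLM_apply, Complex.imCLM_apply, areaForm_apply]
    ext <;> simp only [Prod.smul_mk, smul_eq_mul, Prod.mk_add_mk] <;> ring
  · refine integral_congr_ae ?_
    filter_upwards [h.ae_hasDerivAt] with s hs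
    simp only [hs.deriv, Complex.norm_eq_sqrt_sq_add_sq]

theorem ccNorm_liftStart_le (h : IsPlanarCurve P a) :
    ccNorm (liftStart P a) ≤ ∫ s, ‖a s‖ ∂unitVolume := by
  obtain ⟨p, hp⟩ := h.exists_pathLength_eq
  exact hp ▸ ccNorm_le_pathLength p

theorem liftStart_add {R r : ℝ → ℂ} (h : IsPlanarCurve P a) (hR : IsPlanarCurve R r) :
    liftStart (fun s => P s + R s) (fun s => a s + r s) =
      Hmul (liftStart P a) (heisPoint (R 0) (-(∫ s, areaForm (P s - P 0) (r s) ∂unitVolume)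
        - (∫ s, areaForm (R s) (r s) ∂unitVolume) / 2)) := by
  have hr := hR.memLp_top_deriv.integrable le_top
  have hPa := h.memLp_top_areaForm.integrable le_top
  have hPr := (memLp_top_bilin areaForm h.memLp_top hR.memLp_top_deriv).integrable le_top
  have hRa := (memLp_top_bilin areaForm hR.memLp_top h.memLp_top_deriv).integrable le_top
  have hRr := hR.memLp_top_areaForm.integrable le_top
  have hparts : ∫ s, areaForm (R s) (a s) ∂unitVolume =
      ∫ s, areaForm (P s) (r s) ∂unitVolume + areaForm (P 0) (R 0) := by
    have := (h.bilin areaForm hR.toIsLipschitzPrimitive).integral_eq_sub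
    simp only [areaForm_swap (a _), ← sub_eq_add_neg, integral_sub hPr hRa, h.map_one, map_zero,
      zero_apply, zero_sub] at this
    linarith
  have hconst : ∫ s, areaForm (P 0) (r s) ∂unitVolume = -areaForm (P 0) (R 0) := by
    rw [(areaForm (P 0)).integral_comp_comm hr, hR.integral_eq_sub, hR.map_one, zero_sub, map_neg]
  have hshift : ∫ s, areaForm (P s - P 0) (r s) ∂unitVolume =
      ∫ s, areaForm (P s) (r s) ∂unitVolume + areaForm (P 0) (R 0) := by
    simp only [map_sub, sub_apply]
    rw [integral_sub hPr ((areaForm (P 0)).integrable_comp hr), hconst, sub_neg_eq_add]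
  have harea : ∫ s, areaForm (P s + R s) (a s + r s) ∂unitVolume =
      ∫ s, areaForm (P s) (a s) ∂unitVolume + ∫ s, areaForm (P s) (r s) ∂unitVolume +
      (∫ s, areaForm (R s) (a s) ∂unitVolume + ∫ s, areaForm (R s) (r s) ∂unitVolume) := by
    simp only [map_add, add_apply]
    rw [integral_add (by fun_prop) (by fun_prop), integral_add hPa hRa, integral_add hPr hRr]
    ring
  rw [liftStart, liftStart, Hmul_heisPoint, harea, hshift, hparts]
  congr 1
  ring

end IsPlanarCurve

namespace AdmissiblePath

theorem isLipschitzPrimitive {x y : Heis} (p : AdmissiblePath x y) :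
    IsLipschitzPrimitive p.γ fun s => heisPoint ⟨p.a1 s, p.a2 s⟩
      (areaForm (horizontalPart (p.γ s)) ⟨p.a1 s, p.a2 s⟩ / 2) := by
  refine ⟨p.lipschitz, ?_⟩
  filter_upwards [p.admissible] with s hs
  refine hs.congr_deriv ?_
  simp only [heisPoint, horizontalPart_apply, areaForm_apply]
  ext <;> simp only [Prod.smul_mk, smul_eq_mul, Prod.mk_add_mk] <;> ring

theorem exists_isPlanarCurve {x : Heis} (p : AdmissiblePath x He) :
    ∃ P a, IsPlanarCurve P a ∧ liftStart P a = x ∧ ∫ s, ‖a s‖ ∂unitVolume = pathLength p := by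
  have hheight := (p.isLipschitzPrimitive.clm
    (ContinuousLinearMap.snd ℝ ℝ ℝ ∘L ContinuousLinearMap.snd ℝ ℝ (ℝ × ℝ))).integral_eq_sub
  refine ⟨fun s => horizontalPart (p.γ s), fun s => ⟨p.a1 s, p.a2 s⟩,
    ⟨p.isLipschitzPrimitive.clm horizontalPart, ?_⟩, ?_, ?_⟩
  · rw [p.endpoint]; rfl
  · simp only [heisPoint, p.start, p.endpoint, ContinuousLinearMap.comp_apply,
      ContinuousLinearMap.coe_snd', integral_div, He, zero_sub] at hheight
    rw [liftStart, hheight, neg_neg, p.start, heisPoint_horizontalPart]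
  · simp only [Complex.norm_eq_sqrt_sq_add_sq, pathLength]

end AdmissiblePath

theorem integral_unitVolume_sum_mul_pow {n : ℕ} (c : Fin n → ℝ) :
    ∫ s, ∑ k, c k * s ^ (k : ℕ) ∂unitVolume = ∑ k, c k / (k + 1) := by
  have hmono (k : Fin n) : ∫ s, c k * s ^ (k : ℕ) ∂unitVolume = c k / (k + 1) := by
    rw [integral_const_mul, integral_Icc_eq_integral_Ioc,
      ← intervalIntegral.integral_of_le zero_le_one, integral_pow]
    simp [div_eq_mul_inv]
  rw [integral_finsetSum]
  · exact Finset.sum_congr rfl fun k _ => hmono k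
  · exact fun k _ => (by fun_prop : Continuous fun s : ℝ => c k * s ^ (k : ℕ)).integrableOn_Icc

/-- A gauge on the Heisenberg group, homogeneous under the dilations, that dominates the
Carnot–Carathéodory distance to the identity. -/
noncomputable def heisGauge (x : Heis) : ℝ := ‖horizontalPart x‖ + 17 * √|x.2.2|

theorem continuous_heisGauge : Continuous heisGauge := by
  unfold heisGauge; fun_prop

/-- The segment from `z` to the origin, perturbed by a loop of extent `l` by `m`. The coordinates of
the loop are primitives of shifted Legendre polynomials, so that its velocity and position are both
orthogonal to constants and it encloses area independently of the segment. -/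
noncomputable def legendreCurve (z : ℂ) (l m s : ℝ) : ℂ :=
  (1 - s) • z + ((l * (s - 3 * s ^ 2 + 2 * s ^ 3)) • 1 +
    (m * (s - 6 * s ^ 2 + 10 * s ^ 3 - 5 * s ^ 4)) • Complex.I)

/-- The velocity of `legendreCurve`. -/
noncomputable def legendreVelocity (z : ℂ) (l m s : ℝ) : ℂ :=
  -z + ((l * (1 - 6 * s + 6 * s ^ 2)) • 1 +
    (m * (1 - 12 * s + 30 * s ^ 2 - 20 * s ^ 3)) • Complex.I)

theorem isPlanarCurve_legendreCurve (z : ℂ) (l m : ℝ) :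
    IsPlanarCurve (legendreCurve z l m) (legendreVelocity z l m) := by
  refine ⟨.of_hasDerivAt (fun s => ?_) ?_, ?_⟩
  · have hseg := ((hasDerivAt_id s).const_sub 1).smul_const z
    have hp : HasDerivAt (fun s : ℝ => s - 3 * s ^ 2 + 2 * s ^ 3) (1 - 6 * s + 6 * s ^ 2) s :=
      (((hasDerivAt_id s).sub ((hasDerivAt_pow 2 s).const_mul 3)).add
        ((hasDerivAt_pow 3 s).const_mul 2)).congr_deriv (by push_cast; ring)
    have hq : HasDerivAt (fun s : ℝ => s - 6 * s ^ 2 + 10 * s ^ 3 - 5 * s ^ 4)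
        (1 - 12 * s + 30 * s ^ 2 - 20 * s ^ 3) s :=
      ((((hasDerivAt_id s).sub ((hasDerivAt_pow 2 s).const_mul 6)).add
        ((hasDerivAt_pow 3 s).const_mul 10)).sub
        ((hasDerivAt_pow 4 s).const_mul 5)).congr_deriv (by push_cast; ring)
    exact (hseg.add (((hp.const_mul l).smul_const 1).add
      ((hq.const_mul m).smul_const Complex.I))).congr_deriv (by simp [legendreVelocity])
  · unfold legendreVelocity; fun_prop
  · norm_num [legendreCurve]

theorem liftStart_legendreCurve (z : ℂ) (l m : ℝ) :
    liftStart (legendreCurve z l m) (legendreVelocity z l m) = heisPoint z (l * m / 70) := by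
  have hpoly (s : ℝ) : areaForm (legendreCurve z l m s) (legendreVelocity z l m s) =
      ∑ k, ![z.re * m - z.im * l, -12 * (z.re * m) + 6 * (z.im * l),
        36 * (z.re * m) - 9 * (z.im * l) - 3 * (l * m),
        -40 * (z.re * m) + 4 * (z.im * l) + 16 * (l * m), 15 * (z.re * m) - 33 * (l * m),
        30 * (l * m), -10 * (l * m)] k * s ^ (k : ℕ) := by
    simp only [areaForm_apply, legendreCurve, legendreVelocity, Complex.add_re, Complex.add_im,
      Complex.neg_re, Complex.neg_im, Complex.smul_re, Complex.smul_im, Complex.one_re,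
      Complex.one_im, Complex.I_re, Complex.I_im, smul_eq_mul]
    simp only [Fin.sum_univ_seven, Fin.coe_ofNat_eq_mod, Matrix.cons_val]
    ring
  have h0 : legendreCurve z l m 0 = z := by simp [legendreCurve]
  simp only [liftStart, hpoly, integral_unitVolume_sum_mul_pow, h0]
  congr 1
  simp only [Fin.sum_univ_seven, Fin.coe_ofNat_eq_mod, Matrix.cons_val]
  ring

theorem norm_legendreVelocity_le (z : ℂ) (l m : ℝ) {s : ℝ} (hs : s ∈ Set.Icc (0 : ℝ) 1) :
    ‖legendreVelocity z l m s‖ ≤ ‖z‖ + (|l| + |m|) := by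
  obtain ⟨h0, h1⟩ := hs
  have hp : |1 - 6 * s + 6 * s ^ 2| ≤ 1 := by
    rw [abs_le]; constructor <;> nlinarith [sq_nonneg (2 * s - 1)]
  have hq : |1 - 12 * s + 30 * s ^ 2 - 20 * s ^ 3| ≤ 1 := by
    rw [abs_le]
    constructor
    · nlinarith [mul_nonneg (sub_nonneg.2 h1) (sq_nonneg (4 * (1 - s) - 3)), sq_nonneg (1 - s)]
    · nlinarith [mul_nonneg h0 (sq_nonneg (4 * s - 3)), sq_nonneg s]
  calc ‖legendreVelocity z l m s‖
      ≤ ‖z‖ + (|l * (1 - 6 * s + 6 * s ^ 2)| +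
          |m * (1 - 12 * s + 30 * s ^ 2 - 20 * s ^ 3)|) := by
        grw [legendreVelocity, norm_add_le, norm_add_le, norm_neg]
        simp only [norm_smul, norm_one, Complex.norm_I, Real.norm_eq_abs, mul_one, le_refl]
    _ ≤ ‖z‖ + (|l| + |m|) := by
        rw [abs_mul, abs_mul]
        gcongr
        · exact mul_le_of_le_one_right (abs_nonneg l) hp
        · exact mul_le_of_le_one_right (abs_nonneg m) hq

theorem exists_isPlanarCurve_le_heisGauge (x : Heis) :
    ∃ P a, IsPlanarCurve P a ∧ liftStart P a = x ∧ ∫ s, ‖a s‖ ∂unitVolume ≤ heisGauge x := by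
  set l := √(70 * |x.2.2|) with hl
  set m := SignType.sign x.2.2 * l with hm
  have hcurve := isPlanarCurve_legendreCurve (horizontalPart x) l m
  refine ⟨_, _, hcurve, ?_, ?_⟩
  · have hlm : l * m / 70 = x.2.2 := by
      rw [hm, mul_left_comm, hl, Real.mul_self_sqrt (by positivity), mul_left_comm, sign_mul_abs]
      ring
    rw [liftStart_legendreCurve, hlm, heisPoint_horizontalPart]
  · have hml : |m| ≤ l := by
      rw [hm, abs_mul, abs_of_nonneg (Real.sqrt_nonneg _ : 0 ≤ l)]
      refine mul_le_of_le_one_left (Real.sqrt_nonneg _) ?_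
      obtain h | h | h := lt_trichotomy x.2.2 0 <;> simp [h]
    have hl17 : l + l ≤ 17 * √|x.2.2| := by
      rw [hl, Real.sqrt_mul (by norm_num)]
      have : √70 ≤ 17 / 2 := Real.sqrt_le_iff.2 (by norm_num)
      nlinarith [Real.sqrt_nonneg |x.2.2|]
    calc ∫ s, ‖legendreVelocity (horizontalPart x) l m s‖ ∂unitVolume
        ≤ ∫ _, ‖horizontalPart x‖ + (|l| + |m|) ∂unitVolume := by
          refine integral_mono_ae (hcurve.memLp_top_deriv.integrable le_top).norm
            (integrable_const _) ?_
          filter_upwards [ae_unitVolume_mem_Icc] with s hs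
            using norm_legendreVelocity_le _ _ _ hs
      _ = ‖horizontalPart x‖ + (|l| + |m|) := by simp
      _ ≤ heisGauge x := by
          rw [heisGauge, abs_of_nonneg (Real.sqrt_nonneg _ : 0 ≤ l)]
          linarith

theorem ccNorm_le_heisGauge (x : Heis) : ccNorm x ≤ heisGauge x := by
  obtain ⟨P, a, h, rfl, hle⟩ := exists_isPlanarCurve_le_heisGauge x
  exact h.ccNorm_liftStart_le.trans hle

theorem exists_isPlanarCurve_lt {x : Heis} {c : ℝ} (hc : ccNorm x < c) :
    ∃ P a, IsPlanarCurve P a ∧ liftStart P a = x ∧ ∫ s, ‖a s‖ ∂unitVolume < c := by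
  have hne : {l : ℝ | ∃ p : AdmissiblePath x He, l = pathLength p}.Nonempty := by
    obtain ⟨P, a, h, rfl, -⟩ := exists_isPlanarCurve_le_heisGauge x
    obtain ⟨p, -⟩ := h.exists_pathLength_eq
    exact ⟨_, p, rfl⟩
  obtain ⟨_, ⟨p, rfl⟩, hp⟩ := exists_lt_of_csInf_lt hne hc
  obtain ⟨P, a, h, hstart, hlen⟩ := p.exists_isPlanarCurve
  exact ⟨P, a, h, hstart, hlen ▸ hp⟩

theorem ccNorm_He : ccNorm He = 0 := by
  refine le_antisymm ((ccNorm_le_heisGauge He).trans_eq ?_) (ccNorm_nonneg He)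
  simp [heisGauge, He, horizontalPart_apply, Complex.ext_iff]

namespace IsPlanarCurve

variable {P a : ℝ → ℂ}

theorem norm_le_length (h : IsPlanarCurve P a) {s : ℝ} (hs : s ∈ Set.Icc (0 : ℝ) 1) :
    ‖P s‖ ≤ ∫ r, ‖a r‖ ∂unitVolume := by
  simpa [h.map_one] using h.norm_sub_le h.memLp_top_deriv.norm (.of_forall fun _ => le_rfl)
    (Set.right_mem_Icc.2 zero_le_one) hs

theorem abs_liftStart_le (h : IsPlanarCurve P a) {ρ : ℝ}
    (hρ : ∀ s ∈ Set.Icc (0 : ℝ) 1, ‖P s‖ ≤ ρ) :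
    |(liftStart P a).2.2| ≤ ρ * (∫ s, ‖a s‖ ∂unitVolume) / 2 := by
  have hint : |∫ s, areaForm (P s) (a s) ∂unitVolume| ≤ ∫ s, ρ * ‖a s‖ ∂unitVolume := by
    rw [← Real.norm_eq_abs]
    refine norm_integral_le_of_norm_le
      ((h.memLp_top_deriv.integrable le_top).norm.const_mul ρ) ?_
    filter_upwards [ae_unitVolume_mem_Icc] with s hs
    exact (abs_areaForm_le _ _).trans (mul_le_mul_of_nonneg_right (hρ s hs) (norm_nonneg _))
  rw [integral_const_mul] at hint
  rw [liftStart, heisPoint, abs_neg, abs_div, abs_two]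
  gcongr

end IsPlanarCurve

theorem norm_horizontalPart_le_ccNorm (x : Heis) : ‖horizontalPart x‖ ≤ ccNorm x := by
  refine le_of_forall_gt fun c hc => ?_
  obtain ⟨P, a, h, rfl, hlt⟩ := exists_isPlanarCurve_lt hc
  exact (h.norm_le_length (Set.left_mem_Icc.2 zero_le_one)).trans_lt hlt

theorem two_mul_abs_le_ccNorm_sq (x : Heis) : 2 * |x.2.2| ≤ ccNorm x ^ 2 := by
  rw [← Real.sqrt_le_left (ccNorm_nonneg x)]
  refine le_of_forall_gt fun c hc => ?_
  obtain ⟨P, a, h, rfl, hlt⟩ := exists_isPlanarCurve_lt hc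
  have := h.abs_liftStart_le fun s hs => h.norm_le_length hs
  rw [Real.sqrt_lt' ((ccNorm_nonneg _).trans_lt hc)]
  have hlen : 0 ≤ ∫ s, ‖a s‖ ∂unitVolume := integral_nonneg fun s => norm_nonneg (a s)
  nlinarith

theorem ccNorm_pos {x : Heis} (hx : x ≠ He) : 0 < ccNorm x := by
  refine (ccNorm_nonneg x).lt_of_ne' fun h0 => hx ?_
  have hz : horizontalPart x = 0 := norm_le_zero_iff.1 (h0 ▸ norm_horizontalPart_le_ccNorm x)
  have ht : x.2.2 = 0 := abs_nonpos_iff.1 (by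
    linarith [h0 ▸ two_mul_abs_le_ccNorm_sq x])
  rw [← heisPoint_horizontalPart x, hz, ht]
  rfl

/-- The average position of a plane curve with respect to arclength, or `0` if its length is `0`. -/
noncomputable def lengthMean (P a : ℝ → ℂ) : ℂ :=
  (∫ s, ‖a s‖ ∂unitVolume)⁻¹ • ∫ s, ‖a s‖ • P s ∂unitVolume

/-- The second moment of a plane curve about its average position, with respect to arclength. -/
noncomputable def lengthVariance (P a : ℝ → ℂ) : ℝ :=
  ∫ s, ‖a s‖ * ‖P s - lengthMean P a‖ ^ 2 ∂unitVolume

namespace IsPlanarCurve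

variable {P a : ℝ → ℂ}

theorem integrable_norm (h : IsPlanarCurve P a) : Integrable (fun s => ‖a s‖) unitVolume :=
  (h.memLp_top_deriv.integrable le_top).norm

theorem memLp_top_sub_lengthMean (h : IsPlanarCurve P a) :
    MemLp (fun s => P s - lengthMean P a) ⊤ unitVolume :=
  h.memLp_top.sub (memLp_const _)

theorem integrable_norm_smul {E : Type*} [NormedAddCommGroup E] [NormedSpace ℝ E] {u : ℝ → E}
    (h : IsPlanarCurve P a) (hu : MemLp u ⊤ unitVolume) :
    Integrable (fun s => ‖a s‖ • u s) unitVolume :=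
  (memLp_top_bilin (.lsmul ℝ ℝ) h.memLp_top_deriv.norm hu).integrable le_top

theorem integrable_norm_mul_sq {u : ℝ → ℝ} (h : IsPlanarCurve P a) (hu : MemLp u ⊤ unitVolume) :
    Integrable (fun s => ‖a s‖ * u s ^ 2) unitVolume := by
  simp only [sq]
  exact h.integrable_norm_smul (memLp_top_bilin (.mul ℝ ℝ) hu hu)

theorem integral_norm_smul_sub (h : IsPlanarCurve P a) (z : ℂ) :
    ∫ s, ‖a s‖ • (P s - z) ∂unitVolume =
      (∫ s, ‖a s‖ ∂unitVolume) • (lengthMean P a - z) := by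
  obtain h0 | h0 := eq_or_ne (∫ s, ‖a s‖ ∂unitVolume) 0
  · have ha := (integral_eq_zero_iff_of_nonneg (fun s => norm_nonneg (a s)) h.integrable_norm).1 h0
    rw [h0, zero_smul]
    refine integral_eq_zero_of_ae ?_
    filter_upwards [ha] with s hs
    rw [hs, Pi.zero_apply, zero_smul, Pi.zero_apply]
  · simp only [smul_sub]
    rw [integral_sub (h.integrable_norm_smul h.memLp_top) (h.integrable_norm.smul_const z),
      integral_smul_const, lengthMean, smul_inv_smul₀ h0]

theorem norm_sub_lengthMean_le (h : IsPlanarCurve P a) {t : ℝ} (ht : t ∈ Set.Icc (0 : ℝ) 1) :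
    ‖P t - lengthMean P a‖ ≤ ∫ s, ‖a s‖ ∂unitVolume := by
  set L := ∫ s, ‖a s‖ ∂unitVolume with hL
  have hL0 : 0 ≤ L := integral_nonneg fun s => norm_nonneg (a s)
  obtain h0 | hpos := hL0.eq_or_lt
  · simpa [lengthMean, ← hL, ← h0] using h.norm_le_length ht
  · refine le_of_mul_le_mul_left ?_ hpos
    calc L * ‖P t - lengthMean P a‖ = ‖∫ s, ‖a s‖ • (P s - P t) ∂unitVolume‖ := by
          rw [h.integral_norm_smul_sub, norm_smul, Real.norm_of_nonneg hL0, norm_sub_rev]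
      _ ≤ ∫ s, ‖a s‖ * L ∂unitVolume := by
          refine norm_integral_le_of_norm_le (h.integrable_norm.mul_const L) ?_
          filter_upwards [ae_unitVolume_mem_Icc] with s hs
          rw [norm_smul, norm_norm]
          gcongr
          exact h.norm_sub_le h.memLp_top_deriv.norm (.of_forall fun _ => le_rfl) ht hs
      _ = L * L := integral_mul_const L _

theorem norm_sub_lengthMean_sq_le (h : IsPlanarCurve P a) {t : ℝ} (ht : t ∈ Set.Icc (0 : ℝ) 1) :
    (∫ s, ‖a s‖ ∂unitVolume) * ‖P t - lengthMean P a‖ ^ 2 ≤ lengthVariance P a +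
      (∫ s, ‖a s‖ ∂unitVolume) * (2 * ∫ s, ‖a s‖ * ‖P s - lengthMean P a‖ ∂unitVolume) := by
  set Q : ℝ → ℂ := fun s => P s - lengthMean P a
  set S := ∫ s, ‖a s‖ * ‖Q s‖ ∂unitVolume
  have hQP : IsLipschitzPrimitive Q a := h.sub_const _
  have hint : Integrable (fun s => ‖a s‖ * ‖Q s‖ ^ 2) unitVolume :=
    h.integrable_norm_mul_sq h.memLp_top_sub_lengthMean.norm
  have hosc {s : ℝ} (hs : s ∈ Set.Icc (0 : ℝ) 1) : ‖Q t‖ ^ 2 - ‖Q s‖ ^ 2 ≤ 2 * S := by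
    have hle := (hQP.bilin (innerSL ℝ) hQP).norm_sub_le (m := fun r => 2 * (‖a r‖ * ‖Q r‖))
      ((h.memLp_top_sub_lengthMean.norm.mul h.memLp_top_deriv.norm (r := ⊤)).const_mul 2)
      (.of_forall fun r => ?_) hs ht
    · rw [integral_const_mul, innerSL_apply_apply, innerSL_apply_apply, real_inner_self_eq_norm_sq,
        real_inner_self_eq_norm_sq] at hle
      exact (le_abs_self _).trans hle
    · grw [norm_add_le, innerSL_apply_apply, innerSL_apply_apply, norm_inner_le_norm,
        norm_inner_le_norm]
      exact le_of_eq (by ring)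
  calc (∫ s, ‖a s‖ ∂unitVolume) * ‖Q t‖ ^ 2 = ∫ s, ‖a s‖ * ‖Q t‖ ^ 2 ∂unitVolume :=
        (integral_mul_const _ _).symm
    _ ≤ ∫ s, ‖a s‖ * ‖Q s‖ ^ 2 + ‖a s‖ * (2 * S) ∂unitVolume := by
        refine integral_mono_ae (h.integrable_norm.mul_const _)
          (hint.add (h.integrable_norm.mul_const _)) ?_
        filter_upwards [ae_unitVolume_mem_Icc] with s hs
        rw [← mul_add]
        gcongr
        linarith [hosc hs]
    _ = _ := by
        rw [integral_add hint (h.integrable_norm.mul_const _), integral_mul_const, lengthVariance]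

theorem norm_sub_lengthMean_sq_le_of_lengthVariance_le (h : IsPlanarCurve P a) {δ : ℝ}
    (hδ : 0 < δ) (hδ1 : δ ≤ 1) (hL : 0 < ∫ s, ‖a s‖ ∂unitVolume)
    (hvar : lengthVariance P a ≤ δ ^ 2 * (∫ s, ‖a s‖ ∂unitVolume) ^ 3)
    {t : ℝ} (ht : t ∈ Set.Icc (0 : ℝ) 1) :
    ‖P t - lengthMean P a‖ ^ 2 ≤ 3 * δ * (∫ s, ‖a s‖ ∂unitVolume) ^ 2 := by
  have hosc := h.norm_sub_lengthMean_sq_le ht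
  set L := ∫ s, ‖a s‖ ∂unitVolume with hLdef
  have hQ : MemLp (fun s => ‖P s - lengthMean P a‖) ⊤ unitVolume := h.memLp_top_sub_lengthMean.norm
  have hmean : 2 * (δ * L) * ∫ s, ‖a s‖ * ‖P s - lengthMean P a‖ ∂unitVolume ≤
      (δ * L) ^ 2 * L + lengthVariance P a := by
    have hconst : (δ * L) ^ 2 * L = ∫ s, (δ * L) ^ 2 * ‖a s‖ ∂unitVolume := by
      rw [integral_const_mul, hLdef]
    rw [hconst, lengthVariance, ← integral_const_mul,
      ← integral_add (h.integrable_norm.const_mul _) (h.integrable_norm_mul_sq hQ)]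
    refine integral_mono ((h.integrable_norm_smul hQ).const_mul _)
      ((h.integrable_norm.const_mul _).add (h.integrable_norm_mul_sq hQ)) fun s => ?_
    nlinarith [mul_nonneg (norm_nonneg (a s)) (sq_nonneg (‖P s - lengthMean P a‖ - δ * L))]
  have hmean' : ∫ s, ‖a s‖ * ‖P s - lengthMean P a‖ ∂unitVolume ≤ δ * L ^ 2 := by
    refine le_of_mul_le_mul_left ?_ (show 0 < 2 * (δ * L) by positivity)
    linear_combination hmean + hvar
  refine le_of_mul_le_mul_left ?_ hL
  calc L * ‖P t - lengthMean P a‖ ^ 2 ≤ δ ^ 2 * L ^ 3 + L * (2 * (δ * L ^ 2)) := by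
        grw [hosc, hvar, hmean']
    _ ≤ L * (3 * δ * L ^ 2) := by
        have : δ * δ * L ^ 3 ≤ δ * 1 * L ^ 3 := by gcongr
        linarith

-- A curve clustering around its average position ends close to where it starts and encloses little
-- area, so the gauge would connect its end points by a much shorter curve.
theorem exists_le_lengthVariance : ∃ κ > 0, ∀ {P a : ℝ → ℂ}, IsPlanarCurve P a →
    ∫ s, ‖a s‖ ∂unitVolume ≤ 2 * ccNorm (liftStart P a) →
    κ * (∫ s, ‖a s‖ ∂unitVolume) ^ 3 ≤ lengthVariance P a := by
  refine ⟨(10⁻¹ ^ 8 / 3) ^ 2, by positivity, fun {P a} h hle => ?_⟩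
  by_contra! hvar
  have hmean {t : ℝ} (ht : t ∈ Set.Icc (0 : ℝ) 1) (hL : 0 < ∫ s, ‖a s‖ ∂unitVolume) :=
    h.norm_sub_lengthMean_sq_le_of_lengthVariance_le (by norm_num) (by norm_num) hL hvar.le ht
  set L := ∫ s, ‖a s‖ ∂unitVolume with hLdef
  have hW : 0 ≤ lengthVariance P a := integral_nonneg fun s => by positivity
  have hL : 0 < L := by
    refine (integral_nonneg fun s => norm_nonneg (a s)).lt_of_ne' fun h0 : L = 0 => hvar.not_ge ?_
    rw [h0]
    linarith
  have hQ {t : ℝ} (ht : t ∈ Set.Icc (0 : ℝ) 1) : ‖P t - lengthMean P a‖ ≤ 10⁻¹ ^ 4 * L := by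
    refine abs_le_of_sq_le_sq' ?_ (by positivity) |>.2
    linear_combination hmean ht hL
  have hP {t : ℝ} (ht : t ∈ Set.Icc (0 : ℝ) 1) : ‖P t‖ ≤ 2 * 10⁻¹ ^ 4 * L := by
    have h1 := hQ (Set.right_mem_Icc.2 zero_le_one)
    rw [h.map_one, zero_sub, norm_neg] at h1
    calc ‖P t‖ = ‖(P t - lengthMean P a) + lengthMean P a‖ := by rw [sub_add_cancel]
      _ ≤ 2 * 10⁻¹ ^ 4 * L := by grw [norm_add_le, hQ ht, h1]; linarith
  have hheight : √|(liftStart P a).2.2| ≤ 10⁻¹ ^ 2 * L := by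
    refine Real.sqrt_le_iff.2 ⟨by positivity, (h.abs_liftStart_le fun t ht => hP ht).trans_eq ?_⟩
    rw [← hLdef]
    ring
  have hgauge := ccNorm_le_heisGauge (liftStart P a)
  rw [heisGauge, horizontalPart_liftStart] at hgauge
  linarith [hP (Set.left_mem_Icc.2 zero_le_one)]

theorem exists_lengthVariance_le (h : IsPlanarCurve P a) : ∃ v : ℂ, ‖v‖ = 1 ∧
    lengthVariance P a ≤
      2 * ∫ s, ‖a s‖ * areaForm v (P s - lengthMean P a) ^ 2 ∂unitVolume := by
  have hint (v : ℂ) :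
      Integrable (fun s => ‖a s‖ * areaForm v (P s - lengthMean P a) ^ 2) unitVolume :=
    h.integrable_norm_mul_sq ((areaForm v).comp_memLp' h.memLp_top_sub_lengthMean)
  have hsum : lengthVariance P a =
      ∫ s, ‖a s‖ * areaForm 1 (P s - lengthMean P a) ^ 2 ∂unitVolume +
      ∫ s, ‖a s‖ * areaForm Complex.I (P s - lengthMean P a) ^ 2 ∂unitVolume := by
    rw [lengthVariance, ← integral_add (hint _) (hint _)]
    congr 1 with s
    rw [Complex.sq_norm, Complex.normSq_apply, areaForm_apply, areaForm_apply]
    simp only [Complex.one_re, Complex.one_im, Complex.I_re, Complex.I_im]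
    ring
  obtain hle | hle := le_total
    (∫ s, ‖a s‖ * areaForm 1 (P s - lengthMean P a) ^ 2 ∂unitVolume)
    (∫ s, ‖a s‖ * areaForm Complex.I (P s - lengthMean P a) ^ 2 ∂unitVolume)
  · exact ⟨Complex.I, Complex.norm_I, by linarith⟩
  · exact ⟨1, norm_one, by linarith⟩

end IsPlanarCurve

theorem norm_add_norm_smul_le {E : Type*} [NormedAddCommGroup E] [InnerProductSpace ℝ E]
    (x y : E) : ‖x + ‖x‖ • y‖ ≤ ‖x‖ + inner ℝ x y + ‖x‖ * ‖y‖ ^ 2 / 2 := by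
  obtain rfl | hx := eq_or_ne x 0
  · simp
  · have hpos : 0 < ‖x‖ := norm_pos_iff.2 hx
    obtain ⟨t, ht⟩ : ∃ t, inner ℝ x y = ‖x‖ * t := ⟨_, (mul_div_cancel₀ _ hpos.ne').symm⟩
    have hcs : -‖y‖ ≤ t := by
      have := neg_le_of_abs_le (abs_real_inner_le_norm x y)
      rw [ht, ← mul_neg] at this
      exact le_of_mul_le_mul_left this hpos
    have hfac : 0 ≤ 1 + t + ‖y‖ ^ 2 / 2 := by nlinarith [sq_nonneg (‖y‖ - 1)]
    refine abs_le_of_sq_le_sq' ?_ (le_of_le_of_eq (mul_nonneg hpos.le hfac) (by rw [ht]; ring)) |>.2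
    rw [norm_add_sq_real, inner_smul_right, norm_smul, norm_norm, ht]
    have : 0 ≤ ‖x‖ ^ 2 * (t + ‖y‖ ^ 2 / 2) ^ 2 := by positivity
    linear_combination this

theorem norm_add_norm_smul_add_le {E : Type*} [NormedAddCommGroup E] [InnerProductSpace ℝ E]
    (x w : E) {v : E} (hv : ‖v‖ = 1) (c t : ℝ) :
    ‖x + ‖x‖ • (c • w + t • v)‖ ≤
      ‖x‖ + c * inner ℝ w x + t * inner ℝ x v + c ^ 2 * ‖w‖ ^ 2 * ‖x‖ + ‖x‖ * t ^ 2 := by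
  have hsq : ‖c • w + t • v‖ ^ 2 ≤ 2 * (c ^ 2 * ‖w‖ ^ 2 + t ^ 2) := by
    refine (pow_le_pow_left₀ (norm_nonneg _) (norm_add_le _ _) 2).trans (add_sq_le.trans_eq ?_)
    simp only [norm_smul, hv, mul_pow, Real.norm_eq_abs, sq_abs, mul_one]
  refine (norm_add_norm_smul_le _ _).trans ?_
  rw [inner_add_right, inner_smul_right, inner_smul_right, real_inner_comm]
  linear_combination (‖x‖ / 2) * hsq

theorem integral_areaForm_smul_add_smul {q N q' N' : ℝ → ℝ} (hq : IsLipschitzPrimitive q q')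
    (hN : IsLipschitzPrimitive N N') (hN0 : N 0 = 0) (hN1 : N 1 = 0) (w v : ℂ) :
    ∫ s, areaForm (q s • w + N s • v) (q' s • w + N' s • v) ∂unitVolume =
      2 * areaForm w v * ∫ s, q s * N' s ∂unitVolume := by
  have hqN := (memLp_top_bilin (.mul ℝ ℝ) hq.memLp_top hN.memLp_top_deriv).integrable le_top
  have hNq := (memLp_top_bilin (.mul ℝ ℝ) hq.memLp_top_deriv hN.memLp_top).integrable le_top
  have hparts := (hq.bilin (.mul ℝ ℝ) hN).integral_eq_sub
  rw [integral_add hqN hNq] at hparts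
  simp only [ContinuousLinearMap.mul_apply', hN0, hN1, mul_zero, sub_zero] at hparts hqN hNq
  have hform (s : ℝ) : areaForm (q s • w + N s • v) (q' s • w + N' s • v) =
      areaForm w v * (q s * N' s) - areaForm w v * (q' s * N s) := by
    simp only [areaForm_apply, Complex.add_re, Complex.add_im, Complex.smul_re, Complex.smul_im,
      smul_eq_mul]
    ring
  simp only [hform]
  rw [integral_sub (hqN.const_mul _) (hNq.const_mul _), integral_const_mul, integral_const_mul]
  linear_combination (-areaForm w v) * hparts

namespace IsPlanarCurve

variable {P a : ℝ → ℂ}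

theorem integral_norm_add_norm_smul_le (h : IsPlanarCurve P a)
    (hL : 0 < ∫ s, ‖a s‖ ∂unitVolume) {n : ℝ → ℝ} (hn : MemLp n ⊤ unitVolume) {v : ℂ}
    (hv : ‖v‖ = 1) (w : ℂ) (τ : ℝ) :
    ∫ s, ‖a s + ‖a s‖ • (-(∫ s, ‖a s‖ ∂unitVolume)⁻¹ • w + (τ * n s) • v)‖ ∂unitVolume ≤
      (∫ s, ‖a s‖ ∂unitVolume) + inner ℝ (P 0) w / (∫ s, ‖a s‖ ∂unitVolume) +
      τ * ∫ s, n s * inner ℝ (a s) v ∂unitVolume + ‖w‖ ^ 2 / (∫ s, ‖a s‖ ∂unitVolume) +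
      τ ^ 2 * ∫ s, ‖a s‖ * n s ^ 2 ∂unitVolume := by
  set L := ∫ s, ‖a s‖ ∂unitVolume
  have ha := h.memLp_top_deriv
  have hρ : MemLp (fun s => -L⁻¹ • w + (τ * n s) • v) ⊤ unitVolume :=
    (memLp_const (-L⁻¹ • w)).add
      ((ContinuousLinearMap.toSpanSingleton ℝ v).comp_memLp' (hn.const_mul τ))
  have hint₁ := h.integrable_norm
  have hint₂ : Integrable (fun s => inner ℝ w (a s)) unitVolume :=
    (ha.integrable le_top).const_inner w
  have hint₃ : Integrable (fun s => n s * inner ℝ (a s) v) unitVolume :=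
    (memLp_top_bilin (.mul ℝ ℝ) hn (ha.inner_const v)).integrable le_top
  have hint₄ := h.integrable_norm_mul_sq hn
  have hend : ∫ s, inner ℝ w (a s) ∂unitVolume = -inner ℝ (P 0) w := by
    rw [integral_inner (ha.integrable le_top), h.integral_eq_sub, h.map_one, zero_sub,
      inner_neg_right, real_inner_comm]
  calc ∫ s, ‖a s + ‖a s‖ • (-L⁻¹ • w + (τ * n s) • v)‖ ∂unitVolume
      ≤ ∫ s, (‖a s‖ + -L⁻¹ * inner ℝ w (a s) + τ * (n s * inner ℝ (a s) v) +
          (-L⁻¹) ^ 2 * ‖w‖ ^ 2 * ‖a s‖ + τ ^ 2 * (‖a s‖ * n s ^ 2)) ∂unitVolume := by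
        refine integral_mono ((ha.integrable le_top).add (h.integrable_norm_smul hρ)).norm
          ((((hint₁.add (hint₂.const_mul _)).add (hint₃.const_mul _)).add
            (hint₁.const_mul _)).add (hint₄.const_mul _)) fun s => ?_
        exact (norm_add_norm_smul_add_le _ w hv _ _).trans_eq (by ring)
    _ = _ := by
        rw [integral_add (by fun_prop) (by fun_prop), integral_add (by fun_prop) (by fun_prop),
          integral_add (by fun_prop) (by fun_prop), integral_add (by fun_prop) (by fun_prop)]
        simp only [integral_const_mul]
        rw [hend]
        change L + _ + _ + _ * L + _ = _
        field_simp

end IsPlanarCurve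

theorem isPlanarCurve_smul_add_smul {q N q' N' : ℝ → ℝ} (hq : IsLipschitzPrimitive q q')
    (hN : IsLipschitzPrimitive N N') (hq1 : q 1 = 0) (hN1 : N 1 = 0) (w v : ℂ) :
    IsPlanarCurve (fun s => q s • w + N s • v) (fun s => q' s • w + N' s • v) :=
  ⟨(hq.clm (.toSpanSingleton ℝ w)).add (hN.clm (.toSpanSingleton ℝ v)), by simp [hq1, hN1]⟩

namespace IsPlanarCurve

variable {P a : ℝ → ℂ}

theorem memLp_top_areaForm_sub_lengthMean (h : IsPlanarCurve P a) (v : ℂ) :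
    MemLp (fun s => areaForm v (P s - lengthMean P a)) ⊤ unitVolume :=
  (areaForm v).comp_memLp' h.memLp_top_sub_lengthMean

theorem integral_norm_mul_areaForm_sub_lengthMean (h : IsPlanarCurve P a) (v : ℂ) :
    ∫ s, ‖a s‖ * areaForm v (P s - lengthMean P a) ∂unitVolume = 0 := by
  have hmean := h.integral_norm_smul_sub (lengthMean P a)
  rw [sub_self, smul_zero] at hmean
  simpa only [hmean, map_zero, map_smul, smul_eq_mul] using
    (areaForm v).integral_comp_comm (h.integrable_norm_smul h.memLp_top_sub_lengthMean)

theorem exists_isLipschitzPrimitive_areaForm (h : IsPlanarCurve P a) (v : ℂ) :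
    ∃ N : ℝ → ℝ, IsLipschitzPrimitive N (fun s => ‖a s‖ * areaForm v (P s - lengthMean P a)) ∧
      N 0 = 0 ∧ N 1 = 0 := by
  have hN := IsLipschitzPrimitive.of_memLp
    (memLp_top_bilin (.mul ℝ ℝ) h.memLp_top_deriv.norm (h.memLp_top_areaForm_sub_lengthMean v))
  have hN1 := hN.integral_eq_sub
  simp only [ContinuousLinearMap.mul_apply', intervalIntegral.integral_same, sub_zero,
    h.integral_norm_mul_areaForm_sub_lengthMean v] at hN1
  exact ⟨_, hN, intervalIntegral.integral_same, hN1.symm⟩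

theorem exists_remainingLengthFraction (h : IsPlanarCurve P a) (hL : 0 < ∫ s, ‖a s‖ ∂unitVolume) :
    ∃ q : ℝ → ℝ, IsLipschitzPrimitive q (fun s => -(∫ s, ‖a s‖ ∂unitVolume)⁻¹ * ‖a s‖) ∧
      q 0 = 1 ∧ q 1 = 0 ∧ ∀ s ∈ Set.Icc (0 : ℝ) 1, ‖q s‖ ≤ 1 := by
  set L := ∫ s, ‖a s‖ ∂unitVolume with hLdef
  have hq := (IsLipschitzPrimitive.const 1).add
    (.of_memLp (h.memLp_top_deriv.norm.const_mul (-L⁻¹)))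
  simp only [zero_add] at hq
  have hq1 := hq.integral_eq_sub
  simp only [integral_const_mul, intervalIntegral.integral_same, add_zero] at hq1
  rw [← hLdef, neg_mul, inv_mul_cancel₀ hL.ne'] at hq1
  have hq1' : 1 + ∫ t in (0 : ℝ)..1, -L⁻¹ * ‖a t‖ = 0 := by linarith
  refine ⟨_, hq, by simp, hq1', fun s hs => ?_⟩
  have hle := hq.norm_sub_le (h.memLp_top_deriv.norm.const_mul L⁻¹)
    (.of_forall fun s => by rw [norm_mul, norm_neg, norm_norm, norm_inv, norm_of_nonneg hL.le])
    (Set.right_mem_Icc.2 zero_le_one) hs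
  rwa [integral_const_mul, ← hLdef, inv_mul_cancel₀ hL.ne', hq1', sub_zero] at hle

theorem integral_areaForm_sub_norm_smul (h : IsPlanarCurve P a)
    (hL : ∫ s, ‖a s‖ ∂unitVolume ≠ 0) (v w : ℂ) (τ : ℝ) :
    ∫ s, areaForm (P s - P 0) (‖a s‖ • (-(∫ s, ‖a s‖ ∂unitVolume)⁻¹ • w +
      (τ * areaForm v (P s - lengthMean P a)) • v)) ∂unitVolume =
    -areaForm (lengthMean P a - P 0) w -
      τ * ∫ s, ‖a s‖ * areaForm v (P s - lengthMean P a) ^ 2 ∂unitVolume := by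
  have hint : Integrable (fun s => ‖a s‖ • (P s - P 0)) unitVolume :=
    h.integrable_norm_smul (h.memLp_top.sub (memLp_const _))
  have hintw := (areaForm.flip w).integrable_comp hint
  have hintv := h.integrable_norm_smul (h.memLp_top_areaForm_sub_lengthMean v)
  have hsq := h.integrable_norm_mul_sq (h.memLp_top_areaForm_sub_lengthMean v)
  simp only [smul_eq_mul] at hintv
  have hw : ∫ s, areaForm.flip w (‖a s‖ • (P s - P 0)) ∂unitVolume =
      (∫ s, ‖a s‖ ∂unitVolume) * areaForm (lengthMean P a - P 0) w := by
    rw [(areaForm.flip w).integral_comp_comm hint, h.integral_norm_smul_sub, map_smul,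
      smul_eq_mul, ContinuousLinearMap.flip_apply]
  have hform (s : ℝ) : areaForm (P s - P 0) (‖a s‖ • (-(∫ s, ‖a s‖ ∂unitVolume)⁻¹ • w +
      (τ * areaForm v (P s - lengthMean P a)) • v)) =
      -(∫ s, ‖a s‖ ∂unitVolume)⁻¹ * areaForm.flip w (‖a s‖ • (P s - P 0)) +
      τ * areaForm (lengthMean P a - P 0) v * (‖a s‖ * areaForm v (P s - lengthMean P a)) -
      τ * (‖a s‖ * areaForm v (P s - lengthMean P a) ^ 2) := by
    simp only [ContinuousLinearMap.flip_apply, areaForm_apply, Complex.add_re, Complex.add_im,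
      Complex.smul_re, Complex.smul_im, Complex.sub_re, Complex.sub_im, smul_eq_mul]
    ring
  simp only [hform]
  rw [integral_sub (by fun_prop) (by fun_prop), integral_add (by fun_prop) (by fun_prop)]
  simp only [integral_const_mul]
  rw [hw, h.integral_norm_mul_areaForm_sub_lengthMean, mul_zero, add_zero, neg_mul,
    inv_mul_cancel_left₀ hL]

-- The variation translates the curve by `q • w`, with `q` decreasing from 1 to 0 at a rate
-- proportional to arclength, and deforms it in the direction `v` by the accumulated deviation of
-- its `v`-width from the mean.
theorem ccNorm_variation_le (h : IsPlanarCurve P a) (hL : 0 < ∫ s, ‖a s‖ ∂unitVolume) {v : ℂ}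
    (hv : ‖v‖ = 1) {q : ℝ → ℝ}
    (hq : IsLipschitzPrimitive q (fun s => -(∫ s, ‖a s‖ ∂unitVolume)⁻¹ * ‖a s‖)) (hq0 : q 0 = 1)
    (hq1 : q 1 = 0) (w : ℂ) (τ : ℝ) :
    ccNorm (Hmul (liftStart P a) (heisPoint w (areaForm (lengthMean P a - P 0) w + τ *
      (∫ s, ‖a s‖ * areaForm v (P s - lengthMean P a) ^ 2 ∂unitVolume +
        (∫ s, q s * (‖a s‖ * areaForm v (P s - lengthMean P a)) ∂unitVolume) *
          areaForm v w)))) ≤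
      (∫ s, ‖a s‖ ∂unitVolume) + inner ℝ (P 0) w / (∫ s, ‖a s‖ ∂unitVolume) +
      τ * ∫ s, areaForm v (P s - lengthMean P a) * inner ℝ (a s) v ∂unitVolume +
      ‖w‖ ^ 2 / (∫ s, ‖a s‖ ∂unitVolume) +
      τ ^ 2 * ∫ s, ‖a s‖ * areaForm v (P s - lengthMean P a) ^ 2 ∂unitVolume := by
  obtain ⟨N, hN, hN0, hN1⟩ := h.exists_isLipschitzPrimitive_areaForm v
  have hR := isPlanarCurve_smul_add_smul hq hN hq1 hN1 w (τ • v)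
  have hr (s : ℝ) : (-(∫ s, ‖a s‖ ∂unitVolume)⁻¹ * ‖a s‖) • w +
      (‖a s‖ * areaForm v (P s - lengthMean P a)) • τ • v =
      ‖a s‖ • (-(∫ s, ‖a s‖ ∂unitVolume)⁻¹ • w +
        (τ * areaForm v (P s - lengthMean P a)) • v) := by
    module
  have hPR : IsPlanarCurve _ _ :=
    ⟨h.add hR.toIsLipschitzPrimitive, by rw [h.map_one, hR.map_one, add_zero]⟩
  have hle := hPR.ccNorm_liftStart_le
  rw [h.liftStart_add hR, integral_areaForm_smul_add_smul hq hN hN0 hN1, hq0, hN0] at hle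
  simp only [hr, h.integral_areaForm_sub_norm_smul hL.ne'] at hle
  simp only [one_smul, zero_smul, add_zero, map_smul, smul_eq_mul] at hle
  refine le_of_eq_of_le ?_ (hle.trans (h.integral_norm_add_norm_smul_le hL
    (h.memLp_top_areaForm_sub_lengthMean v) hv w τ))
  congr 3
  rw [areaForm_swap w v]
  ring

theorem exists_ccNorm_variation_le (h : IsPlanarCurve P a)
    (hL : 0 < ∫ s, ‖a s‖ ∂unitVolume) {v : ℂ} (hv : ‖v‖ = 1) :
    ∃ E B : ℝ, |E| ≤ (∫ s, ‖a s‖ ∂unitVolume) ^ 2 ∧ |B| ≤ (∫ s, ‖a s‖ ∂unitVolume) ^ 2 ∧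
      ∀ (w : ℂ) (τ : ℝ), ccNorm (Hmul (liftStart P a) (heisPoint w
        (areaForm (lengthMean P a - P 0) w + τ *
          (∫ s, ‖a s‖ * areaForm v (P s - lengthMean P a) ^ 2 ∂unitVolume +
            E * areaForm v w)))) ≤
        (∫ s, ‖a s‖ ∂unitVolume) + inner ℝ (P 0) w / (∫ s, ‖a s‖ ∂unitVolume) + τ * B +
          ‖w‖ ^ 2 / (∫ s, ‖a s‖ ∂unitVolume) +
          τ ^ 2 * ∫ s, ‖a s‖ * areaForm v (P s - lengthMean P a) ^ 2 ∂unitVolume := by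
  have hn {s : ℝ} (hs : s ∈ Set.Icc (0 : ℝ) 1) :
      ‖areaForm v (P s - lengthMean P a)‖ ≤ ∫ s, ‖a s‖ ∂unitVolume := by
    grw [Real.norm_eq_abs, abs_areaForm_le, hv, one_mul, h.norm_sub_lengthMean_le hs]
  obtain ⟨q, hq, hq0, hq1, hqle⟩ := h.exists_remainingLengthFraction hL
  have hbound {f : ℝ → ℝ} (hf : ∀ s ∈ Set.Icc (0 : ℝ) 1, ‖f s‖ ≤
      ‖areaForm v (P s - lengthMean P a)‖ * ‖a s‖) :
      |∫ s, f s ∂unitVolume| ≤ (∫ s, ‖a s‖ ∂unitVolume) ^ 2 := by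
    rw [sq, ← integral_const_mul, ← Real.norm_eq_abs]
    refine norm_integral_le_of_norm_le (h.integrable_norm.const_mul _) ?_
    filter_upwards [ae_unitVolume_mem_Icc] with s hs
    grw [hf s hs, hn hs]
  refine ⟨_, _, hbound fun s hs => ?_, hbound fun s _ => ?_,
    h.ccNorm_variation_le hL hv hq hq0 hq1⟩
  · grw [norm_mul, hqle s hs, one_mul, norm_mul, norm_norm, mul_comm]
  · grw [norm_mul, norm_inner_le_norm, hv, mul_one]

end IsPlanarCurve

/-- A barrier of scale `L` for the distance from the identity at `x`: an upper bound for `ccNorm`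
at all right translates of `x`, in coordinates `(w, σ)` on the group. Here `σ` is the vertical
displacement relative to the plane of slope `p`, up to the factor `1 + areaForm b w`. -/
structure IsBarrier (C : ℝ) (x : Heis) (L : ℝ) (p b : ℂ) (β : ℝ) : Prop where
  norm_slope_le : ‖p‖ ≤ L
  norm_shear_le : ‖b‖ ≤ C / L
  abs_vertical_le : |β| ≤ C / L
  ccNorm_le (w : ℂ) (σ : ℝ) :
    ccNorm (Hmul x (heisPoint w (areaForm p w + σ * (1 + areaForm b w)))) ≤
      L + inner ℝ (horizontalPart x) w / L + β * σ + ‖w‖ ^ 2 / L + C * σ ^ 2 / L ^ 3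

theorem exists_isBarrier : ∃ C > 0, ∀ {x : Heis} {c : ℝ}, x ≠ He → ccNorm x < c →
    ∃ L p b β, ccNorm x ≤ L ∧ L < c ∧ IsBarrier C x L p b β := by
  obtain ⟨κ, hκ, hvar⟩ := IsPlanarCurve.exists_le_lengthVariance
  refine ⟨2 / κ, by positivity, fun {x c} hx hc => ?_⟩
  have hd := ccNorm_pos hx
  obtain ⟨P, a, h, rfl, hlt⟩ := exists_isPlanarCurve_lt (lt_min hc (by linarith : _ < 2 * ccNorm x))
  obtain ⟨hLc, hL2⟩ := lt_min_iff.1 hlt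
  have hdL := h.ccNorm_liftStart_le
  have hL := hd.trans_le hdL
  obtain ⟨v, hv, hV⟩ := h.exists_lengthVariance_le
  obtain ⟨E, B, hE, hB, hle⟩ := h.exists_ccNorm_variation_le hL hv
  have hmean := h.norm_sub_lengthMean_le (Set.left_mem_Icc.2 zero_le_one)
  replace hV := (hvar h hL2.le).trans hV
  set L := ∫ s, ‖a s‖ ∂unitVolume
  set V := ∫ s, ‖a s‖ * areaForm v (P s - lengthMean P a) ^ 2 ∂unitVolume
  have hV0 : 0 < V := by
    have : 0 < κ * L ^ 3 := by positivity
    linarith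
  have hdiv {t : ℝ} (ht : |t| ≤ L ^ 2) : |t / V| ≤ 2 / κ / L := by
    rw [abs_div, abs_of_pos hV0, div_div, div_le_div_iff₀ hV0 (by positivity)]
    calc |t| * (κ * L) ≤ L ^ 2 * (κ * L) := by gcongr
      _ ≤ 2 * V := by linarith
  refine ⟨L, lengthMean P a - P 0, (E / V) • v, B / V, hdL, hLc, ?_, ?_, hdiv hB, fun w σ => ?_⟩
  · rwa [norm_sub_rev]
  · rw [norm_smul, hv, mul_one]
    exact hdiv hE
  · have hσ : σ * (1 + areaForm ((E / V) • v) w) = σ / V * (V + E * areaForm v w) := by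
      rw [map_smul, smul_apply, smul_eq_mul]
      field_simp
    have hsq : (σ / V) ^ 2 * V ≤ 2 / κ * σ ^ 2 / L ^ 3 := by
      rw [div_pow, div_mul_eq_mul_div, div_mul_eq_mul_div, div_div,
        div_le_div_iff₀ (by positivity) (by positivity)]
      have := mul_le_mul_of_nonneg_left hV (show 0 ≤ V * σ ^ 2 by positivity)
      linarith
    rw [hσ, horizontalPart_liftStart]
    refine (hle w (σ / V)).trans ?_
    rw [div_mul_eq_mul_div, div_mul_eq_mul_div, mul_comm σ B]
    gcongr

namespace IsBarrier

variable {C L β : ℝ} {x : Heis} {p b : ℂ}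

theorem ccNorm_horizontal_le (hb : IsBarrier C x L p b β) (hL : 0 < L) {w : ℂ}
    (hw : 2 * C * ‖w‖ ≤ L) :
    ccNorm (Hmul x (heisPoint w 0)) ≤ L + inner ℝ (horizontalPart x) w / L - β * areaForm p w +
      (1 + 2 * C ^ 2 + 4 * C) * (‖w‖ ^ 2 / L) := by
  have hC : 0 ≤ C := by
    have := (norm_nonneg b).trans hb.norm_shear_le
    rwa [le_div_iff₀ hL, zero_mul] at this
  set k := areaForm p w
  set t := areaForm b w
  have hk : |k| ≤ L * ‖w‖ := (abs_areaForm_le p w).trans (by grw [hb.norm_slope_le])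
  have ht : |t| ≤ C / L * ‖w‖ := (abs_areaForm_le b w).trans (by grw [hb.norm_shear_le])
  have ht_half : 1 / 2 ≤ 1 + t := by
    have : C / L * ‖w‖ ≤ 1 / 2 := by
      rw [div_mul_eq_mul_div, div_le_iff₀ hL]; linarith
    linarith [neg_abs_le t]
  obtain ⟨σ, hσ⟩ : ∃ σ, σ * (1 + t) = -k := ⟨-k / (1 + t), div_mul_cancel₀ _ (by linarith)⟩
  have hσ_le : |σ| ≤ 2 * (L * ‖w‖) := by
    have habs := congrArg abs hσ
    rw [abs_mul, abs_neg, abs_of_pos (show 0 < 1 + t by linarith)] at habs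
    nlinarith [abs_nonneg σ]
  have hdev : β * σ ≤ -(β * k) + 2 * C ^ 2 * (‖w‖ ^ 2 / L) := by
    have hle : |β * (t * σ)| ≤ C / L * (C / L * ‖w‖ * (2 * (L * ‖w‖))) := by
      rw [abs_mul, abs_mul]
      gcongr
      exact hb.abs_vertical_le
    have heq : C / L * (C / L * ‖w‖ * (2 * (L * ‖w‖))) = 2 * C ^ 2 * (‖w‖ ^ 2 / L) := by
      field_simp
    linear_combination β * hσ + (neg_abs_le _).trans' (neg_le_neg (hle.trans_eq heq))
  have hsq : C * σ ^ 2 / L ^ 3 ≤ 4 * C * (‖w‖ ^ 2 / L) := by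
    calc C * σ ^ 2 / L ^ 3 ≤ C * (2 * (L * ‖w‖)) ^ 2 / L ^ 3 := by
          rw [← sq_abs σ]
          gcongr
      _ = 4 * C * (‖w‖ ^ 2 / L) := by field_simp; ring
  have hle := hb.ccNorm_le w σ
  rw [hσ, add_neg_cancel] at hle
  linarith

theorem ccNorm_add_ccNorm_le (hb : IsBarrier C x L p b β) (hL : 0 < L) {w : ℂ}
    (hw : 2 * C * ‖w‖ ≤ L) :
    ccNorm (Hmul x (heisPoint w 0)) + ccNorm (Hmul x (heisPoint (-w) 0)) ≤
      2 * L + 2 * (1 + 2 * C ^ 2 + 4 * C) * (‖w‖ ^ 2 / L) := by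
  have hneg := hb.ccNorm_horizontal_le hL (w := -w) (by rwa [norm_neg])
  rw [norm_neg, inner_neg_right, map_neg, neg_div] at hneg
  linarith [hb.ccNorm_horizontal_le hL hw]

end IsBarrier

theorem ccNorm_Hmul_heisPoint_le (x : Heis) (w : ℂ) :
    ccNorm (Hmul x (heisPoint w 0)) ≤ 18 * (ccNorm x + ‖w‖) := by
  have hd := ccNorm_nonneg x
  have hw := norm_nonneg w
  have hz := norm_horizontalPart_le_ccNorm x
  have ht := two_mul_abs_le_ccNorm_sq x
  have hmul : Hmul x (heisPoint w 0) = heisPoint (horizontalPart x + w)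
      (x.2.2 + 0 + areaForm (horizontalPart x) w / 2) :=
    Hmul_heisPoint (horizontalPart x) w x.2.2 0
  set z := horizontalPart x
  set d := ccNorm x
  have hheight : |x.2.2 + 0 + areaForm z w / 2| ≤ (d + ‖w‖) ^ 2 := by
    have hform : |areaForm z w| ≤ d * ‖w‖ := (abs_areaForm_le z w).trans (by gcongr)
    calc |x.2.2 + 0 + areaForm z w / 2| ≤ |x.2.2| + |areaForm z w| / 2 := by
          rw [add_zero]
          exact (abs_add_le _ _).trans_eq (by rw [abs_div, abs_two])
      _ ≤ (d + ‖w‖) ^ 2 := by nlinarith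
  calc ccNorm (Hmul x (heisPoint w 0))
      ≤ ‖z + w‖ + 17 * √|x.2.2 + 0 + areaForm z w / 2| := by
        rw [hmul]
        exact ccNorm_le_heisGauge _
    _ ≤ d + ‖w‖ + 17 * (d + ‖w‖) := by
        grw [norm_add_le, hz, hheight, Real.sqrt_sq (by positivity)]
    _ = 18 * (d + ‖w‖) := by ring

/-- The symmetric second difference of `f` at `x` under right translation by `y` and its inverse
`-y`; along `y = h • v` it approximates `h²` times the second derivative in the left-invariant
direction `v`. -/
noncomputable def secondDifference (f : Heis → ℝ) (y x : Heis) : ℝ :=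
  f (Hmul x y) + f (Hmul x (-y)) - 2 * f x

theorem exists_secondDifference_ccNorm_le : ∃ K > 0, ∀ (x : Heis), x ≠ He → ∀ w : ℂ,
    secondDifference ccNorm (heisPoint w 0) x ≤ K * (‖w‖ ^ 2 / ccNorm x) := by
  obtain ⟨C, hC, hbarrier⟩ := exists_isBarrier
  set K₁ := 2 * (1 + 2 * C ^ 2 + 4 * C)
  set K₂ := 36 * (2 * C + 1) * (2 * C)
  refine ⟨K₁ + K₂, by positivity, fun x hx w => ?_⟩
  have hd := ccNorm_pos hx
  rw [secondDifference, neg_heisPoint, neg_zero]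
  obtain hnear | hfar := le_total (2 * C * ‖w‖) (ccNorm x)
  · have hclose : ccNorm (Hmul x (heisPoint w 0)) + ccNorm (Hmul x (heisPoint (-w) 0)) ≤
        2 * ccNorm x + K₁ * (‖w‖ ^ 2 / ccNorm x) := by
      refine le_of_forall_pos_le_add fun ε hε => ?_
      obtain ⟨L, p, b, β, hdL, hLε, hb⟩ := hbarrier hx (lt_add_of_pos_right _ (half_pos hε))
      have hdiv : K₁ * (‖w‖ ^ 2 / L) ≤ K₁ * (‖w‖ ^ 2 / ccNorm x) := by gcongr
      linarith [hb.ccNorm_add_ccNorm_le (hd.trans_le hdL) (hnear.trans hdL)]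
    have : 0 ≤ K₂ * (‖w‖ ^ 2 / ccNorm x) := by positivity
    linarith
  · have hpos := ccNorm_Hmul_heisPoint_le x w
    have hneg := ccNorm_Hmul_heisPoint_le x (-w)
    rw [norm_neg] at hneg
    have hw : ‖w‖ ≤ 2 * C * (‖w‖ ^ 2 / ccNorm x) := by
      rw [← mul_div_assoc, le_div_iff₀ hd]
      nlinarith [norm_nonneg w]
    have hfar' : 36 * (2 * C + 1) * ‖w‖ ≤ K₂ * (‖w‖ ^ 2 / ccNorm x) := by
      rw [mul_assoc (36 * (2 * C + 1))]
      gcongr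
    have : 0 ≤ K₁ * (‖w‖ ^ 2 / ccNorm x) := by positivity
    linarith

theorem Hmul_neg_cancel_left (x y : Heis) : Hmul x (Hmul (-x) y) = y := by
  ext <;> simp only [Hmul, Prod.fst_neg, Prod.snd_neg] <;> ring

theorem upperSemicontinuous_ccNorm : UpperSemicontinuous ccNorm := by
  obtain ⟨C, -, hbarrier⟩ := exists_isBarrier
  intro x c hc
  obtain rfl | hx := eq_or_ne x He
  · have hgauge : heisGauge He < c := by
      have hzero : heisGauge He = 0 := by simp [heisGauge, show He = 0 from rfl]
      exact hzero ▸ (ccNorm_nonneg He).trans_lt hc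
    filter_upwards [continuous_heisGauge.continuousAt.eventually_lt_const hgauge] with y hy
    exact (ccNorm_le_heisGauge y).trans_lt hy
  · obtain ⟨L, p, b, β, -, hLc, hb⟩ := hbarrier hx hc
    let w : Heis → ℂ := fun y => horizontalPart (Hmul (-x) y)
    let σ : Heis → ℝ := fun y =>
      ((Hmul (-x) y).2.2 - areaForm p (w y)) / (1 + areaForm b (w y))
    have hcont : Continuous (Hmul (-x)) := by unfold Hmul; fun_prop
    have hx0 : Hmul (-x) x = 0 := by
      ext <;> simp only [Hmul, Prod.fst_neg, Prod.snd_neg, Prod.fst_zero, Prod.snd_zero] <;> ring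
    have hwx : w x = 0 := by simp only [w, hx0, map_zero]
    have hσx : σ x = 0 := by simp [σ, hx0, hwx]
    have hne : 1 + areaForm b (w x) ≠ 0 := by simp [hwx]
    have hw : ContinuousAt w x := by fun_prop
    have hσ : ContinuousAt σ x := by fun_prop (disch := exact hne)
    have hbound : ContinuousAt (fun y => L + inner ℝ (horizontalPart x) (w y) / L + β * σ y +
        ‖w y‖ ^ 2 / L + C * σ y ^ 2 / L ^ 3) x := by fun_prop
    have hden : ContinuousAt (fun y => 1 + areaForm b (w y)) x := by fun_prop
    filter_upwards [hbound.eventually_lt_const (by simpa [hwx, hσx] using hLc),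
      hden.eventually_ne hne] with y hy hyne
    have hle := hb.ccNorm_le (w y) (σ y)
    rw [div_mul_cancel₀ _ hyne, add_sub_cancel] at hle
    exact (Hmul_neg_cancel_left x y ▸ hle).trans_lt hy

theorem continuous_Hmul : Continuous fun p : Heis × Heis => Hmul p.1 p.2 := by
  unfold Hmul; fun_prop

theorem Hmul_zero (x : Heis) : Hmul x 0 = x := by
  ext <;> simp [Hmul]

theorem Hmul_neg_cancel_right (x y : Heis) : Hmul (Hmul x y) (-y) = x := by
  ext <;> simp only [Hmul, Prod.fst_neg, Prod.snd_neg] <;> ring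

/-- Right translation by `y` in the Heisenberg group, whose inverse is right translation
by `-y`. -/
noncomputable def rightTranslation (y : Heis) : Heis ≃ₜ Heis where
  toFun x := Hmul x y
  invFun x := Hmul x (-y)
  left_inv x := Hmul_neg_cancel_right x y
  right_inv x := by simpa only [neg_neg] using Hmul_neg_cancel_right x (-y)
  continuous_toFun := by unfold Hmul; fun_prop
  continuous_invFun := by unfold Hmul; fun_prop

theorem rightTranslation_apply (y x : Heis) : rightTranslation y x = Hmul x y := rfl

-- Right translation is triangular with translations on the diagonal, hence unimodular.
theorem measurePreserving_rightTranslation (y : Heis) :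
    MeasurePreserving (rightTranslation y) := by
  have htail : ∀ a : ℝ, MeasurePreserving fun q : ℝ × ℝ =>
      (q.1 + y.2.1, q.2 + y.2.2 + (a * y.2.1 - q.1 * y.1) / 2) := fun a =>
    MeasurePreserving.skew_product (f := (· + y.2.1))
      (g := fun s t => t + y.2.2 + (a * y.2.1 - s * y.1) / 2)
      (measurePreserving_add_right _ _) (by fun_prop)
      (.of_forall fun s => by
        simp only [add_assoc]
        exact (measurePreserving_add_right _ _).map_eq)
  exact MeasurePreserving.skew_product (f := (· + y.1))
    (g := fun a (q : ℝ × ℝ) => (q.1 + y.2.1, q.2 + y.2.2 + (a * y.2.1 - q.1 * y.1) / 2))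
    (measurePreserving_add_right _ _) (by fun_prop) (.of_forall fun a => (htail a).map_eq)

theorem integral_mul_comp_Hmul (f g : Heis → ℝ) (y : Heis) :
    ∫ x, f x * g (Hmul x y) = ∫ x, f (Hmul x (-y)) * g x := by
  simpa only [rightTranslation_apply, Hmul_neg_cancel_right] using
    (measurePreserving_rightTranslation y).integral_comp (rightTranslation y).measurableEmbedding
      fun x => f (Hmul x (-y)) * g x

/-- The value at `x` of the left-invariant vector field that equals `v` at the identity. -/
noncomputable def leftField (v x : Heis) : Heis :=
  (v.1, v.2.1, v.2.2 + (x.1 * v.2.1 - x.2.1 * v.1) / 2)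

/-- The derivative of `f` along the left-invariant vector field that equals `v` at the
identity. -/
noncomputable def leftDeriv (v : Heis) (f : Heis → ℝ) (x : Heis) : ℝ :=
  fderiv ℝ f x (leftField v x)

theorem X1_eq_leftDeriv : X1 = leftDeriv (heisPoint 1 0) := by
  ext f x
  have : leftField (heisPoint 1 0) x = (1, 0, 0) - (x.2.1 / 2) • ((0, 0, 1) : Heis) := by
    ext <;> simp only [leftField, heisPoint, Complex.one_re, Complex.one_im, Prod.smul_mk,
      smul_eq_mul, Prod.mk_sub_mk] <;> ring
  rw [X1, leftDeriv, this, map_sub, map_smul, smul_eq_mul]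

theorem X2_eq_leftDeriv : X2 = leftDeriv (heisPoint Complex.I 0) := by
  ext f x
  have : leftField (heisPoint Complex.I 0) x = (0, 1, 0) + (x.1 / 2) • ((0, 0, 1) : Heis) := by
    ext <;> simp [leftField, heisPoint]
  rw [X2, leftDeriv, this, map_add, map_smul, smul_eq_mul]

theorem contDiff_leftDeriv {n : WithTop ℕ∞} {f : Heis → ℝ} (hf : ContDiff ℝ (n + 1) f)
    (v : Heis) : ContDiff ℝ n (leftDeriv v f) :=
  (hf.fderiv_right le_rfl).clm_apply (by unfold leftField; fun_prop)

theorem tsupport_leftDeriv_subset (v : Heis) (f : Heis → ℝ) :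
    tsupport (leftDeriv v f) ⊆ tsupport f := by
  refine closure_minimal (fun x hx => ?_) (isClosed_tsupport f)
  by_contra hxf
  exact hx (by rw [leftDeriv, fderiv_of_notMem_tsupport ℝ hxf]; rfl)

theorem hasDerivAt_comp_Hmul_smul {f : Heis → ℝ} (hf : Differentiable ℝ f) (x v : Heis) (t : ℝ) :
    HasDerivAt (fun t : ℝ => f (Hmul x (t • v))) (leftDeriv v f (Hmul x (t • v))) t := by
  have hcurve : HasDerivAt (fun t : ℝ => Hmul x (t • v)) (leftField v (Hmul x (t • v))) t := by
    have hline : (fun t : ℝ => Hmul x (t • v)) = fun t => x + t • leftField v x := by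
      ext t <;> simp only [Hmul, leftField, Prod.smul_fst, Prod.smul_snd, smul_eq_mul, Prod.fst_add,
        Prod.snd_add, Prod.smul_mk]
      ring
    have hfield : leftField v (Hmul x (t • v)) = leftField v x := by
      ext <;> simp only [Hmul, leftField, Prod.smul_fst, Prod.smul_snd, smul_eq_mul]
      ring
    rw [hline, hfield]
    simpa using ((hasDerivAt_id t).smul_const (leftField v x)).const_add x
  exact (hf _).hasFDerivAt.comp_hasDerivAt t hcurve

theorem exists_add_sub_two_mul_eq_sq_mul {p p' p'' : ℝ → ℝ} (hp : ∀ t, HasDerivAt p (p' t) t)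
    (hp' : ∀ t, HasDerivAt p' (p'' t) t) {h : ℝ} (hh : 0 < h) :
    ∃ c, |c| < h ∧ p h + p (-h) - 2 * p 0 = h ^ 2 * p'' c := by
  have heven : ∀ t, HasDerivAt (fun t => p t + p (-t)) (p' t - p' (-t)) t := fun t =>
    ((hp t).add ((hp (-t)).comp t (hasDerivAt_neg t))).congr_deriv (by ring)
  have hsq : ∀ t : ℝ, HasDerivAt (fun t : ℝ => t ^ 2) (2 * t) t := fun t => by
    simpa using hasDerivAt_pow 2 t
  obtain ⟨a, ⟨ha, hah⟩, hratio⟩ := exists_ratio_hasDerivAt_eq_ratio_slope _ _ hh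
    (HasDerivAt.continuousOn fun t _ => heven t) (fun t _ => heven t) _ _
    (HasDerivAt.continuousOn fun t _ => hsq t) fun t _ => hsq t
  obtain ⟨c, ⟨hac, hca⟩, hslope⟩ := exists_hasDerivAt_eq_slope p' p'' (show -a < a by linarith)
    (HasDerivAt.continuousOn fun t _ => hp' t) fun t _ => hp' t
  refine ⟨c, abs_lt.2 ⟨by linarith, by linarith⟩, mul_left_cancel₀ ha.ne' ?_⟩
  rw [eq_div_iff (by linarith)] at hslope
  simp only [neg_zero] at hratio
  linear_combination -hratio / 2 - h ^ 2 / 2 * hslope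

theorem integrable_ccNorm_comp_mul {F : Heis → Heis} (hF : Continuous F) {g : Heis → ℝ}
    (hg : Continuous g) (hgc : HasCompactSupport g) :
    Integrable fun x => ccNorm (F x) * g x := by
  have hgauge : Integrable fun x => heisGauge (F x) * g x :=
    ((continuous_heisGauge.comp hF).mul hg).integrable_of_hasCompactSupport hgc.mul_left
  have hmeas : Measurable ccNorm := upperSemicontinuous_ccNorm.measurable
  refine hgauge.mono ((hmeas.comp hF.measurable).mul hg.measurable).aestronglyMeasurable
    (.of_forall fun x => ?_)
  rw [norm_mul, norm_mul, Real.norm_of_nonneg (ccNorm_nonneg _)]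
  gcongr
  exact (ccNorm_le_heisGauge _).trans (le_abs_self _)

instance : (volume : Measure Heis).IsAddHaarMeasure :=
  have : (volume : Measure (ℝ × ℝ)).IsAddHaarMeasure := Measure.prod.instIsAddHaarMeasure _ _
  Measure.prod.instIsAddHaarMeasure _ _

theorem norm_le_mul_ccNorm (x : Heis) : ‖x‖ ≤ (1 + ‖x‖) * ccNorm x := by
  have hd := ccNorm_nonneg x
  have hx := norm_nonneg x
  have hhoriz : ‖horizontalPart x‖ ≤ (1 + ‖x‖) * ccNorm x := by
    nlinarith [norm_horizontalPart_le_ccNorm x]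
  have hvert : |x.2.2| ≤ ‖x‖ := (norm_snd_le x.2).trans (norm_snd_le x)
  refine norm_prod_le_iff.2 ⟨(Complex.abs_re_le_norm (horizontalPart x)).trans hhoriz,
    norm_prod_le_iff.2 ⟨(Complex.abs_im_le_norm (horizontalPart x)).trans hhoriz, ?_⟩⟩
  refine abs_le_of_sq_le_sq ?_ (by positivity)
  calc x.2.2 ^ 2 = |x.2.2| * |x.2.2| := by rw [abs_mul_abs_self, sq]
    _ ≤ ‖x‖ * ccNorm x ^ 2 := by
      gcongr
      linarith [two_mul_abs_le_ccNorm_sq x, abs_nonneg x.2.2]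
    _ ≤ ((1 + ‖x‖) * ccNorm x) ^ 2 := by
      rw [mul_pow]
      gcongr
      nlinarith

theorem integrable_div_ccNorm {g : Heis → ℝ} (hg : Continuous g) (hgc : HasCompactSupport g) :
    Integrable fun x => g x / ccNorm x := by
  obtain ⟨C, hC⟩ := HasCompactSupport.exists_bound_of_continuous
    (f := fun x => (1 + ‖x‖) * g x) hgc.mul_left (by fun_prop)
  have hdecay : ∀ x, ‖g x / ccNorm x‖ ≤ C * ‖x‖ ^ (-1 : ℝ) := fun x => by
    obtain rfl | hx := eq_or_ne x He
    · have : 0 ≤ C := (norm_nonneg _).trans (hC He)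
      rw [ccNorm_He, div_zero, norm_zero]
      positivity
    · have hd := ccNorm_pos hx
      have hx0 : 0 < ‖x‖ := norm_pos_iff.2 hx
      rw [norm_div, Real.norm_of_nonneg hd.le, Real.rpow_neg_one, ← div_eq_mul_inv,
        div_le_div_iff₀ hd hx0]
      calc ‖g x‖ * ‖x‖ ≤ ‖g x‖ * ((1 + ‖x‖) * ccNorm x) := by
            gcongr
            exact norm_le_mul_ccNorm x
        _ = ‖(1 + ‖x‖) * g x‖ * ccNorm x := by
            rw [norm_mul, Real.norm_of_nonneg (show 0 ≤ 1 + ‖x‖ by positivity)]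
            ring
        _ ≤ C * ccNorm x := by grw [hC x]
  have hdim : Module.finrank ℝ Heis = 3 := by simp
  have hmeas : Measurable ccNorm := upperSemicontinuous_ccNorm.measurable
  have hloc : LocallyIntegrable fun x => g x / ccNorm x :=
    locallyIntegrable_of_norm_le_rpow (by rw [hdim]; norm_num) (by rw [hdim]; norm_num)
      (.of_forall hdecay) (hg.measurable.div hmeas).aestronglyMeasurable
  refine (integrableOn_iff_integrable_of_support_subset fun x hx => ?_).1
    (hloc.integrableOn_isCompact hgc.isCompact)
  exact subset_tsupport g fun h => hx (by simp only [h, zero_div])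

section SecondDifference

variable {φ : Heis → ℝ}

theorem integrable_secondDifference_ccNorm_mul (hφ : Continuous φ) (hφc : HasCompactSupport φ)
    (y : Heis) : Integrable fun x => secondDifference ccNorm y x * φ x := by
  have hleft : ∀ y, Integrable fun x => ccNorm (Hmul x y) * φ x := fun y =>
    integrable_ccNorm_comp_mul (rightTranslation y).continuous hφ hφc
  have hint : Integrable fun x => ccNorm x * φ x :=
    integrable_ccNorm_comp_mul continuous_id hφ hφc
  simp only [secondDifference, sub_mul, add_mul, mul_assoc (2 : ℝ)]
  exact ((hleft y).add (hleft (-y))).sub (hint.const_mul 2)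

theorem integral_ccNorm_mul_secondDifference (hφ : Continuous φ) (hφc : HasCompactSupport φ)
    (y : Heis) :
    ∫ x, ccNorm x * secondDifference φ y x = ∫ x, secondDifference ccNorm y x * φ x := by
  have htrans : ∀ y, Continuous fun x => Hmul x y := fun y => (rightTranslation y).continuous
  have hint : Integrable fun x => ccNorm x * φ x :=
    integrable_ccNorm_comp_mul continuous_id hφ hφc
  have hleft : ∀ y, Integrable fun x => ccNorm (Hmul x y) * φ x := fun y =>
    integrable_ccNorm_comp_mul (htrans y) hφ hφc
  have hright : ∀ y, Integrable fun x => ccNorm x * φ (Hmul x y) := fun y =>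
    integrable_ccNorm_comp_mul continuous_id (hφ.comp (htrans y))
      (hφc.comp_homeomorph (rightTranslation y))
  simp only [secondDifference, mul_sub, mul_add, sub_mul, add_mul, mul_left_comm _ (2 : ℝ),
    mul_assoc (2 : ℝ)]
  rw [integral_sub (by fun_prop) (by fun_prop), integral_sub (by fun_prop) (by fun_prop),
    integral_add (hright y) (hright (-y)), integral_add (hleft y) (hleft (-y)),
    integral_mul_comp_Hmul, integral_mul_comp_Hmul, neg_neg,
    add_comm (∫ x, ccNorm (Hmul x (-y)) * φ x)]

end SecondDifference

section SecondOrder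

variable {φ : Heis → ℝ}

theorem exists_secondDifference_eq (hφ : ContDiff ℝ 2 φ) (v x : Heis) {h : ℝ} (hh : 0 < h) :
    ∃ c, |c| < h ∧
      secondDifference φ (h • v) x = h ^ 2 * leftDeriv v (leftDeriv v φ) (Hmul x (c • v)) := by
  have hφ' : ContDiff ℝ 1 (leftDeriv v φ) := contDiff_leftDeriv hφ v
  simpa only [secondDifference, neg_smul, zero_smul, Hmul_zero] using
    exists_add_sub_two_mul_eq_sq_mul
      (hasDerivAt_comp_Hmul_smul (hφ.differentiable two_ne_zero) x v)
      (hasDerivAt_comp_Hmul_smul (hφ'.differentiable one_ne_zero) x v) hh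

theorem continuous_leftDeriv_leftDeriv (hφ : ContDiff ℝ 2 φ) (v : Heis) :
    Continuous (leftDeriv v (leftDeriv v φ)) :=
  (contDiff_leftDeriv (n := 0) (contDiff_leftDeriv hφ v) v).continuous

theorem hasCompactSupport_leftDeriv (hφc : HasCompactSupport φ) (v : Heis) :
    HasCompactSupport (leftDeriv v φ) :=
  hφc.of_isClosed_subset (isClosed_tsupport _) (tsupport_leftDeriv_subset v φ)

theorem tendsto_secondDifference_div_sq (hφ : ContDiff ℝ 2 φ) (v x : Heis) :
    Tendsto (fun h : ℝ => secondDifference φ (h • v) x / h ^ 2) (nhdsWithin 0 (Set.Ioi 0))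
      (nhds (leftDeriv v (leftDeriv v φ) x)) := by
  have hcont : Continuous fun t : ℝ => leftDeriv v (leftDeriv v φ) (Hmul x (t • v)) :=
    (continuous_leftDeriv_leftDeriv hφ v).comp
      (continuous_Hmul.comp (continuous_const.prodMk (by fun_prop)))
  rw [Metric.tendsto_nhdsWithin_nhds]
  intro ε hε
  obtain ⟨δ, hδ, hclose⟩ := Metric.continuousAt_iff.1 hcont.continuousAt ε hε
  refine ⟨δ, hδ, fun {h} (hh : 0 < h) hhδ => ?_⟩
  obtain ⟨c, hc, heq⟩ := exists_secondDifference_eq hφ v x hh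
  rw [Real.dist_0_eq_abs, abs_of_pos hh] at hhδ
  rw [heq, mul_div_cancel_left₀ _ (by positivity)]
  simpa only [zero_smul, Hmul_zero] using hclose ((Real.dist_0_eq_abs c).trans_lt (hc.trans hhδ))

theorem exists_norm_secondDifference_div_sq_le (hφ : ContDiff ℝ 2 φ)
    (hφc : HasCompactSupport φ) (v : Heis) :
    ∃ S : Set Heis, IsCompact S ∧ ∃ C : ℝ, ∀ h ∈ Set.Ioo (0 : ℝ) 1, ∀ x,
      ‖secondDifference φ (h • v) x / h ^ 2‖ ≤ S.indicator (fun _ => C) x := by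
  set ψ := leftDeriv v (leftDeriv v φ)
  have hψc : HasCompactSupport ψ :=
    hasCompactSupport_leftDeriv (hasCompactSupport_leftDeriv hφc v) v
  obtain ⟨C, hC⟩ := hψc.exists_bound_of_continuous (continuous_leftDeriv_leftDeriv hφ v)
  have hflow : Continuous fun q : ℝ × Heis => Hmul q.2 (-(q.1 • v)) :=
    continuous_Hmul.comp (continuous_snd.prodMk (by fun_prop))
  have hS := ((isCompact_Icc (a := (-1 : ℝ)) (b := 1)).prod hψc.isCompact).image hflow
  refine ⟨_, hS, C, fun h hh x => ?_⟩
  obtain ⟨c, hc, heq⟩ := exists_secondDifference_eq hφ v x hh.1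
  have hne : h ^ 2 ≠ 0 := pow_ne_zero 2 hh.1.ne'
  rw [heq, mul_div_cancel_left₀ _ hne]
  refine Set.le_indicator_apply (fun _ => hC _) fun hx => ?_
  have hsupp : Hmul x (c • v) ∉ tsupport ψ := fun hmem => hx
    ⟨(c, Hmul x (c • v)), ⟨abs_le.1 (hc.trans hh.2).le, hmem⟩, Hmul_neg_cancel_right _ _⟩
  exact (norm_eq_zero.2 (image_eq_zero_of_notMem_tsupport hsupp)).le

theorem tendsto_integral_ccNorm_mul_secondDifference (hφ : ContDiff ℝ 2 φ)
    (hφc : HasCompactSupport φ) (v : Heis) :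
    Tendsto (fun h : ℝ => ∫ x, ccNorm x * (secondDifference φ (h • v) x / h ^ 2))
      (nhdsWithin 0 (Set.Ioi 0)) (nhds (∫ x, ccNorm x * leftDeriv v (leftDeriv v φ) x)) := by
  obtain ⟨S, hS, C, hC⟩ := exists_norm_secondDifference_div_sq_le hφ hφc v
  have hbound : Integrable fun x => heisGauge x * S.indicator (fun _ => C) x := by
    simp_rw [← Set.indicator_mul_right S heisGauge]
    exact (integrable_indicator_iff hS.measurableSet).2
      ((continuous_heisGauge.mul continuous_const).continuousOn.integrableOn_compact hS)
  have hmeas : Measurable ccNorm := upperSemicontinuous_ccNorm.measurable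
  refine tendsto_integral_filter_of_dominated_convergence _ (.of_forall fun h => ?_) ?_ hbound
    (.of_forall fun x => (tendsto_secondDifference_div_sq hφ v x).const_mul _)
  · have hdiff : Continuous (secondDifference φ (h • v)) := by
      have := hφ.continuous
      unfold secondDifference Hmul
      fun_prop
    exact (hmeas.mul (hdiff.measurable.div_const _)).aestronglyMeasurable
  · filter_upwards [Ioo_mem_nhdsGT one_pos] with h hh
    refine .of_forall fun x => ?_
    rw [norm_mul, Real.norm_of_nonneg (ccNorm_nonneg x)]
    have hgauge := ccNorm_le_heisGauge x
    have hnonneg := (ccNorm_nonneg x).trans hgauge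
    gcongr
    exact hC h hh x

theorem integral_ccNorm_mul_leftDeriv_leftDeriv_le {K : ℝ}
    (hK : ∀ x, x ≠ He → ∀ w : ℂ,
      secondDifference ccNorm (heisPoint w 0) x ≤ K * (‖w‖ ^ 2 / ccNorm x))
    (hφ : ContDiff ℝ 2 φ) (hφc : HasCompactSupport φ) (hφ0 : ∀ x, 0 ≤ φ x) (w : ℂ) :
    ∫ x, ccNorm x * leftDeriv (heisPoint w 0) (leftDeriv (heisPoint w 0) φ) x ≤
      K * ‖w‖ ^ 2 * ∫ x, φ x / ccNorm x := by
  refine le_of_tendsto (tendsto_integral_ccNorm_mul_secondDifference hφ hφc _)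
    (eventually_mem_nhdsWithin.mono fun h (hh : 0 < h) => ?_)
  have hpoint : h • heisPoint w 0 = heisPoint (h • w) 0 := by
    ext <;> simp [heisPoint]
  have hne : ∀ᵐ x : Heis, x ≠ He := compl_mem_ae_iff.2 (measure_singleton _)
  simp_rw [← mul_div_assoc]
  rw [integral_div, integral_ccNorm_mul_secondDifference hφ.continuous hφc,
    div_le_iff₀ (by positivity), mul_right_comm, ← integral_const_mul, hpoint]
  refine integral_mono_ae (integrable_secondDifference_ccNorm_mul hφ.continuous hφc _)
    ((integrable_div_ccNorm hφ.continuous hφc).const_mul _) ?_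
  filter_upwards [hne] with x hx
  calc secondDifference ccNorm (heisPoint (h • w) 0) x * φ x
      ≤ K * (‖h • w‖ ^ 2 / ccNorm x) * φ x := by
        gcongr
        exacts [hφ0 x, hK x hx _]
    _ = K * ‖w‖ ^ 2 * h ^ 2 * (φ x / ccNorm x) := by
        rw [norm_smul, mul_pow, Real.norm_eq_abs, sq_abs]
        ring

end SecondOrder

theorem heisenberg_subLaplacian_dist_bound_general :
    ∃ K : ℝ, 0 < K ∧ ∀ φ : Heis → ℝ, ContDiff ℝ 2 φ → HasCompactSupport φ → (∀ x, 0 ≤ φ x) →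
      ∫ x : Heis, ccNorm x * subLap φ x ≤ K * ∫ x : Heis, φ x / ccNorm x := by
  obtain ⟨K, hK_pos, hK⟩ := exists_secondDifference_ccNorm_le
  refine ⟨2 * K, by positivity, fun φ hφ hφc hφ0 => ?_⟩
  have hint : ∀ v, Integrable fun x => ccNorm x * leftDeriv v (leftDeriv v φ) x := fun v =>
    integrable_ccNorm_comp_mul continuous_id (continuous_leftDeriv_leftDeriv hφ v)
      (hasCompactSupport_leftDeriv (hasCompactSupport_leftDeriv hφc v) v)
  have h₁ := integral_ccNorm_mul_leftDeriv_leftDeriv_le hK hφ hφc hφ0 1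
  have h₂ := integral_ccNorm_mul_leftDeriv_leftDeriv_le hK hφ hφc hφ0 Complex.I
  rw [norm_one] at h₁
  rw [Complex.norm_I] at h₂
  simp only [subLap, X1_eq_leftDeriv, X2_eq_leftDeriv, mul_add]
  rw [integral_add (hint _) (hint _)]
  linarith

/-- There is a constant `K > 0` such that `Δd ≤ K/d` in the sense of distributions:
for every nonnegative smooth compactly supported `φ : ℝ³ → ℝ`,
`∫ d(x) Δφ(x) dx ≤ K ∫ φ(x)/d(x) dx`. -/
theorem heisenberg_subLaplacian_dist_bound :
    ∃ K : ℝ, 0 < K ∧ ∀ φ : Heis → ℝ, ContDiff ℝ (⊤ : ℕ∞) φ → HasCompactSupport φ →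
      (∀ x, 0 ≤ φ x) →
      ∫ x : Heis, ccNorm x * subLap φ x ≤ K * ∫ x : Heis, φ x / ccNorm x := by
  obtain ⟨K, hK, hle⟩ := heisenberg_subLaplacian_dist_bound_general
  exact ⟨K, hK, fun φ hφ => hle φ (hφ.of_le (mod_cast ENat.LEInfty.out))⟩
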